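/- There exists a constant C > 0 such that for every n ≥ 2, φ^0_{Λ_n^even}[h_0²] ≤ C · log n, where h_0 denotes the height at the origin. -/

import Mathlib

open scoped BigOperators

namespace SquareIce

/-- Vertices of the square lattice `ℤ²`. -/
abbrev V : Type := ℤ × ℤ

/-- Nearest-neighbour adjacency: Euclidean distance 1. -/
def adj (u v : V) : Prop := (u.1 - v.1).natAbs + (u.2 - v.2).natAbs = 1

/-- Diagonal (`×`) adjacency: Euclidean distance `√2`. -/
def xadj (u v : V) : Prop := (u.1 - v.1).natAbs = 1 ∧ (u.2 - v.2).natAbs = 1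

/-- `*`-adjacency: graph distance exactly 2 in `ℤ²`. -/
def starAdj (u v : V) : Prop := (u.1 - v.1).natAbs + (u.2 - v.2).natAbs = 2

/-- A vertex is even when the sum of its coordinates is even. -/
def IsEvenV (v : V) : Prop := Even (v.1 + v.2)

/-- Squared Euclidean distance between two vertices. -/
def distSq (u v : V) : ℤ := (u.1 - v.1) ^ 2 + (u.2 - v.2) ^ 2

/-- Sup-norm of a vertex. -/
def infNorm (v : V) : ℤ := max |v.1| |v.2|

/-- `h` is a height function on `D` (normalised to vanish outside `D`):
increments of absolute value one along edges of `D`, and even values on even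
vertices (equivalently, `h v` has the parity of `v.1 + v.2`). -/
def IsHeightFn (D : Set V) (h : V → ℤ) : Prop :=
  (∀ u v, u ∈ D → v ∈ D → adj u v → |h u - h v| = 1) ∧
  (∀ v ∈ D, Even (h v + v.1 + v.2)) ∧ (∀ v, v ∉ D → h v = 0)

/-- Boundary of `D`: vertices of `D` with a nearest neighbour outside `D`. -/
def bdry (D : Set V) : Set V := {v | v ∈ D ∧ ∃ u, u ∉ D ∧ adj u v}

/-- `A` and `B` are joined by a `rel`-path all of whose vertices lie in `S`. -/
def Connected (rel : V → V → Prop) (S A B : Set V) : Prop :=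
  ∃ p : List V, ∃ hp : p ≠ [], List.Chain' rel p ∧ (∀ v ∈ p, v ∈ S) ∧
    p.head hp ∈ A ∧ p.getLast hp ∈ B

/-- `S` is the vertex set of a closed `×`-path. -/
def IsXCircuit (S : Set V) : Prop :=
  ∃ p : List V, ∃ hp : p ≠ [], List.Chain' xadj p ∧ p.head hp = p.getLast hp ∧
    {v | v ∈ p} = S

/-- A domain: a finite set whose boundary is a `×`-circuit. -/
def IsDomain (D : Set V) : Prop := D.Finite ∧ IsXCircuit (bdry D)

/-- An even domain: a domain whose boundary consists of even vertices. -/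
def IsEvenDomain (D : Set V) : Prop := IsDomain D ∧ ∀ v ∈ bdry D, IsEvenV v

/-- Height functions on `D` whose value at every `v ∈ B` lies in `κ v`. -/
def HomSet (D B : Set V) (κ : V → Set ℤ) : Set (V → ℤ) :=
  {h | IsHeightFn D h ∧ ∀ v ∈ B, h v ∈ κ v}

/-- Height functions on `D` with prescribed boundary values `κ` on `∂D`. -/
def HomBC (D : Set V) (κ : V → ℤ) : Set (V → ℤ) :=
  {h | IsHeightFn D h ∧ ∀ v ∈ bdry D, h v = κ v}

/-- Height functions on `D` vanishing on `∂D`. -/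
def Hom0 (D : Set V) : Set (V → ℤ) := HomBC D (fun _ => 0)

/-- Probability of `A` under the uniform measure on the finite set `S`. -/
noncomputable def pr {α : Type*} (S A : Set α) : ℝ :=
  (Nat.card (S ∩ A : Set α) : ℝ) / (Nat.card S : ℝ)

/-- Expectation of `f` under the uniform measure on the finite set `S`. -/
noncomputable def expec {α : Type*} (S : Set α) (f : α → ℝ) : ℝ :=
  (∑ᶠ x ∈ S, f x) / (Nat.card S : ℝ)

/-- The box `Λ_{a,b} = ([-a,a] × [-b,b]) ∩ ℤ²`. -/
def Lam2 (a b : ℤ) : Set V := {v | |v.1| ≤ a ∧ |v.2| ≤ b}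

/-- The box `Λ_a`. -/
def Lam (a : ℤ) : Set V := Lam2 a a

def leftSide (a b : ℤ) : Set V := {v | v.1 = -a ∧ |v.2| ≤ b}
def rightSide (a b : ℤ) : Set V := {v | v.1 = a ∧ |v.2| ≤ b}
def topSide (a b : ℤ) : Set V := {v | |v.1| ≤ a ∧ v.2 = b}
def botSide (a b : ℤ) : Set V := {v | |v.1| ≤ a ∧ v.2 = -b}

/-- Horizontal crossing of `Λ_{a,b}` by a `rel`-path of vertices satisfying `P`. -/
def HCross (rel : V → V → Prop) (a b : ℤ) (P : V → Prop) : Prop :=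
  Connected rel {v | v ∈ Lam2 a b ∧ P v} (leftSide a b) (rightSide a b)

/-- Vertical crossing of `Λ_{a,b}` by a `rel`-path of vertices satisfying `P`. -/
def VCross (rel : V → V → Prop) (a b : ℤ) (P : V → Prop) : Prop :=
  Connected rel {v | v ∈ Lam2 a b ∧ P v} (topSide a b) (botSide a b)

/-- `F` is increasing with respect to the pointwise order on `D`. -/
def IncreasingOn (D : Set V) (F : (V → ℤ) → ℝ) : Prop :=
  ∀ h h' : V → ℤ, (∀ v ∈ D, h v ≤ h' v) → F h ≤ F h'

/-- The even box `Λ_m^even`: everything inside or on the even `×`-circuit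
surrounding the origin contained in `Λ_{m+1} ∖ Λ_{m-1}`. -/
def LamEven (m : ℤ) : Set V := Lam m ∪ {v | infNorm v = m + 1 ∧ IsEvenV v}

/-- A quad: a domain `D` together with an enumeration `p` of its boundary
`×`-circuit (closed: first vertex repeated at the end) and marked points
`a = p[0]`, `b = p[ib]`, `c = p[ic]`, `d = p[idx]` in cyclic order. -/
structure Quad where
  D : Set V
  p : List V
  hp : p ≠ []
  hchain : List.Chain' xadj p
  hclosed : p.head hp = p.getLast hp
  hbd : {v | v ∈ p} = bdry D
  hfin : D.Finite
  ib : ℕ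
  ic : ℕ
  idx : ℕ
  h0b : 0 < ib
  hbc : ib < ic
  hcd : ic < idx
  hdlen : idx + 1 < p.length

namespace Quad

def ptA (q : Quad) : V := q.p.head q.hp
def ptB (q : Quad) : V := q.p.getD q.ib ((0 : ℤ), (0 : ℤ))
def ptC (q : Quad) : V := q.p.getD q.ic ((0 : ℤ), (0 : ℤ))
def ptD (q : Quad) : V := q.p.getD q.idx ((0 : ℤ), (0 : ℤ))

/-- The (closed) arc `[ab]` of the boundary of a quad. -/
def arcAB (q : Quad) : Set V := {v | v ∈ q.p.take (q.ib + 1)}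

/-- The (closed) arc `[bc]` of the boundary of a quad. -/
def arcBC (q : Quad) : Set V := {v | v ∈ (q.p.drop q.ib).take (q.ic - q.ib + 1)}

/-- The (closed) arc `[cd]` of the boundary of a quad. -/
def arcCD (q : Quad) : Set V := {v | v ∈ (q.p.drop q.ic).take (q.idx - q.ic + 1)}

/-- The (closed) arc `[da]` of the boundary of a quad. -/
def arcDA (q : Quad) : Set V := {v | v ∈ q.p.drop q.idx}

/-- The open arc `(bc)` (excluding the endpoints `b` and `c`). -/
def openBC (q : Quad) : Set V :=
  {v | v ∈ (((q.p.drop q.ib).take (q.ic - q.ib + 1)).drop 1).dropLast}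

/-- The open arc `(da)` (excluding the endpoints `d` and `a`). -/
def openDA (q : Quad) : Set V := {v | v ∈ ((q.p.drop q.idx).drop 1).dropLast}

end Quad

section
def OmP (H : ℤ) (E N : Finset V) (h : V → ℤ) : Prop :=
  (∀ u v, adj u v → h u - h v = 1 ∨ h u - h v = -1) ∧
  (∀ v : V, (h v + v.1 + v.2) % 2 = 0) ∧
  (∀ v, -H ≤ h v ∧ h v ≤ H) ∧
  (∀ v : V, (v.1 + v.2) % 2 = 0 → v ∉ E → h v = 0) ∧
  (∀ v : V, (v.1 + v.2) % 2 = 1 → v ∉ N → h v = 1)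

def bas (v : V) : ℤ := (v.1 + v.2) % 2

lemma OmP_finite (H : ℤ) (E N : Finset V) : {h | OmP H E N h}.Finite := by
  classical
  let g : (((E ∪ N : Finset V) : Set V) → Set.Icc (-H) H) → V → ℤ := fun f v =>
    if hv : v ∈ E ∪ N then (f ⟨v, hv⟩ : ℤ) else bas v
  refine (Set.finite_range g).subset ?_
  rintro h ⟨h1, h2, h3, h4, h5⟩
  refine ⟨fun v => ⟨h v.1, h3 v.1⟩, ?_⟩
  funext v
  by_cases hv : v ∈ E ∪ N
  · simp only [g, dif_pos hv]
  · simp only [g, dif_neg hv]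
    simp only [Finset.mem_union, not_or] at hv
    unfold bas
    rcases Int.emod_two_eq_zero_or_one (v.1 + v.2) with h0 | h0
    · rw [h4 v h0 hv.1, h0]
    · rw [h5 v h0 hv.2, h0]

noncomputable def Om (H : ℤ) (E N : Finset V) : Finset (V → ℤ) := (OmP_finite H E N).toFinset

@[simp] lemma mem_Om {H : ℤ} {E N : Finset V} {h : V → ℤ} : h ∈ Om H E N ↔ OmP H E N h := by
  simp [Om]

lemma bas_OmP {H : ℤ} (hH : 1 ≤ H) (E N : Finset V) : OmP H E N bas := by
  refine ⟨?_, ?_, ?_, ?_, ?_⟩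
  · intro u v huv
    unfold adj at huv
    unfold bas
    omega
  all_goals
    intro v
    unfold bas
    omega

lemma Om_card_pos {H : ℤ} (hH : 1 ≤ H) (E N : Finset V) : (0 : ℝ) < (Om H E N).card := by
  have : (Om H E N).Nonempty := ⟨bas, by simpa using bas_OmP hH E N⟩
  exact_mod_cast this.card_pos

noncomputable def avg (S : Finset (V → ℤ)) (f : (V → ℤ) → ℝ) : ℝ := (∑ h ∈ S, f h) / S.card

noncomputable def phi (h : V → ℤ) (v : V) : ℝ := if (v.1 + v.2) % 2 = 0 then (h v : ℝ) else 0

def nb4 (v : V) : Finset V :=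
  {(v.1 + 1, v.2), (v.1 - 1, v.2), (v.1, v.2 + 1), (v.1, v.2 - 1)}

lemma mem_nb4 {u v : V} : u ∈ nb4 v ↔ adj v u := by
  obtain ⟨a, b⟩ := u
  obtain ⟨c, d⟩ := v
  simp only [nb4, adj, Finset.mem_insert, Finset.mem_singleton, Prod.mk.injEq]
  omega

def nb (E : Finset V) : Finset V := E.biUnion nb4

lemma mem_nb {E : Finset V} {u : V} : u ∈ nb E ↔ ∃ v ∈ E, adj v u := by
  simp [nb, mem_nb4]

lemma adj_symm {u v : V} (h : adj u v) : adj v u := by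
  unfold adj at *; omega

lemma nb_mono {E E' : Finset V} (h : E ⊆ E') : nb E ⊆ nb E' := by
  intro u hu
  rw [mem_nb] at *
  obtain ⟨v, hv, ha⟩ := hu
  exact ⟨v, h hv, ha⟩

/-- dependence on even vertices only -/
def EvDep (f : (V → ℤ) → ℝ) : Prop :=
  ∀ h h' : V → ℤ, (∀ v : V, (v.1 + v.2) % 2 = 0 → h v = h' v) → f h = f h'

lemma phi_congr {h h' : V → ℤ} (hh : ∀ v : V, (v.1 + v.2) % 2 = 0 → h v = h' v) (v : V) :
    phi h v = phi h' v := by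
  unfold phi
  split_ifs with h0
  · rw [hh v h0]
  · rfl

lemma insert_sum {H : ℤ} (hH : 1 ≤ H) {E N : Finset V} (o : V) (ho : o ∉ nb E) (ho' : o ∉ N)
    (hod : (o.1 + o.2) % 2 = 1) (f : (V → ℤ) → ℝ) (hf : EvDep f) :
    ∑ h ∈ Om H E (insert o N), f h = 2 * ∑ h ∈ Om H E N, f h := by
  classical
  have hz : ∀ h, OmP H E (insert o N) h → ∀ v, adj o v → h v = 0 := by
    intro h hh v hv
    refine hh.2.2.2.1 v ?_ ?_
    · unfold adj at hv; omega
    · intro hvE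
      exact ho (mem_nb.2 ⟨v, hvE, adj_symm hv⟩)
  have hpm : ∀ h, OmP H E (insert o N) h → h o = 1 ∨ h o = -1 := by
    intro h hh
    have ha : adj o (o.1 + 1, o.2) := by simp [adj]
    have h1 := hh.1 o _ ha
    rw [hz h hh _ ha] at h1
    omega
  have hupd : ∀ h, OmP H E (insert o N) h → ∀ e : ℤ, (e = 1 ∨ e = -1) →
      OmP H E (insert o N) (Function.update h o e) := by
    intro h hh e he
    have hod2 := hh.2.1 o
    have hz' := hz h hh
    obtain ⟨h1, h2, h3, h4, h5⟩ := hh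
    refine ⟨?_, ?_, ?_, ?_, ?_⟩
    · intro u v huv
      by_cases hu : u = o
      · subst hu
        have : v ≠ u := by rintro rfl; simp [adj] at huv
        rw [Function.update_self, Function.update_of_ne this, hz' v huv]
        omega
      · by_cases hv : v = o
        · subst hv
          rw [Function.update_self, Function.update_of_ne hu, hz' u (adj_symm huv)]
          omega
        · rw [Function.update_of_ne hu, Function.update_of_ne hv]
          exact h1 u v huv
    · intro v
      by_cases hv : v = o
      · subst hv; rw [Function.update_self]; omega
      · rw [Function.update_of_ne hv]; exact h2 v
    · intro v
      by_cases hv : v = o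
      · subst hv; rw [Function.update_self]; omega
      · rw [Function.update_of_ne hv]; exact h3 v
    · intro v h0 hv'
      have hv : v ≠ o := by rintro rfl; omega
      rw [Function.update_of_ne hv]; exact h4 v h0 hv'
    · intro v h0 hv'
      have hv : v ≠ o := by rintro rfl; simp at hv'
      rw [Function.update_of_ne hv]; exact h5 v h0 hv'
  rw [← Finset.sum_filter_add_sum_filter_not (Om H E (insert o N)) (fun h => h o = 1)]
  have e1 : (Om H E (insert o N)).filter (fun h => h o = 1) = Om H E N := by
    ext h
    simp only [Finset.mem_filter, mem_Om]
    constructor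
    · rintro ⟨⟨h1, h2, h3, h4, h5⟩, h6⟩
      refine ⟨h1, h2, h3, h4, ?_⟩
      intro v h0 hv
      by_cases hvo : v = o
      · rw [hvo, h6]
      · exact h5 v h0 (by simp [hvo, hv])
    · rintro ⟨h1, h2, h3, h4, h5⟩
      refine ⟨⟨h1, h2, h3, h4, ?_⟩, h5 o hod ho'⟩
      intro v h0 hv
      exact h5 v h0 (by simp at hv; exact hv.2)
  have e2 : ∑ h ∈ (Om H E (insert o N)).filter (fun h => ¬ h o = 1), f h
      = ∑ h ∈ (Om H E (insert o N)).filter (fun h => h o = 1), f h := by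
    refine Finset.sum_nbij' (fun h => Function.update h o 1) (fun h => Function.update h o (-1))
      ?_ ?_ ?_ ?_ ?_
    · intro h hh
      simp only [Finset.mem_filter, mem_Om] at hh ⊢
      exact ⟨hupd h hh.1 1 (Or.inl rfl), by simp⟩
    · intro h hh
      simp only [Finset.mem_filter, mem_Om] at hh ⊢
      exact ⟨hupd h hh.1 (-1) (Or.inr rfl), by simp⟩
    · intro h hh
      simp only [Finset.mem_filter, mem_Om] at hh
      have := (hpm h hh.1).resolve_left hh.2
      simp [← this]
    · intro h hh
      simp only [Finset.mem_filter, mem_Om] at hh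
      simp [← hh.2]
    · intro h hh
      apply hf
      intro v hv
      have : v ≠ o := by rintro rfl; omega
      rw [Function.update_of_ne this]
  rw [e2, e1]; ring

lemma Om_insert_even {H : ℤ} {E N : Finset V} (o : V) 
    (hod : (o.1 + o.2) % 2 ≠ 1) : Om H E (insert o N) = Om H E N := by
  ext h
  simp only [mem_Om, OmP]
  have : (∀ v : V, (v.1 + v.2) % 2 = 1 → v ∉ insert o N → h v = 1) ↔
    (∀ v : V, (v.1 + v.2) % 2 = 1 → v ∉ N → h v = 1) := by
    refine forall_congr' fun v => forall_congr' fun h0 => ?_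
    have : v ≠ o := by rintro rfl; exact hod h0
    simp [this]
  rw [this]

lemma avg_indep {H : ℤ} (hH : 1 ≤ H) {E N : Finset V} (hN : nb E ⊆ N) (f : (V → ℤ) → ℝ)
    (hf : EvDep f) : avg (Om H E N) f = avg (Om H E (nb E)) f := by
  classical
  suffices h : ∀ M : Finset V, avg (Om H E (nb E ∪ M)) f = avg (Om H E (nb E)) f by
    have := h N
    rwa [Finset.union_eq_right.2 hN] at this
  intro M
  induction M using Finset.induction_on with
  | empty => simp
  | insert o M hoM ih =>
    rw [Finset.union_insert, ← ih]
    by_cases h1 : o ∈ nb E ∪ M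
    · rw [Finset.insert_eq_self.2 h1]
    by_cases h2 : (o.1 + o.2) % 2 = 1
    · have h3 : o ∉ nb E := fun h => h1 (Finset.mem_union_left _ h)
      have a1 := insert_sum hH o h3 h1 h2 f hf
      have a2 := insert_sum hH o h3 h1 h2 (fun _ => 1) (fun _ _ _ => rfl)
      simp only [Finset.sum_const, nsmul_eq_mul, mul_one] at a2
      unfold avg
      rw [a1, a2]
      exact mul_div_mul_left _ _ two_ne_zero
    · rw [Om_insert_even o h2]

noncomputable def corr (H : ℤ) (E : Finset V) (v w : V) : ℝ :=
  avg (Om H E (nb E)) (fun h => phi h v * phi h w)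

lemma corr_eq {H : ℤ} (hH : 1 ≤ H) {E N : Finset V} (hN : nb E ⊆ N) (v w : V) :
    corr H E v w = avg (Om H E N) (fun h => phi h v * phi h w) := by
  unfold corr
  rw [avg_indep hH hN]
  intro h h' hh
  simp only [phi_congr hh]
end

section
lemma inf_ap (a b : V → ℤ) (v : V) : (a ⊓ b) v = min (a v) (b v) := rfl
lemma sup_ap (a b : V → ℤ) (v : V) : (a ⊔ b) v = max (a v) (b v) := rfl

lemma inf_step {h a : V → ℤ} {u v : V} (h1 : h u - h v = 1 ∨ h u - h v = -1)
    (h2 : a u - a v = 1 ∨ a u - a v = -1) (h3 : (h u - a u) % 2 = 0) :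
    (h ⊓ a) u - (h ⊓ a) v = 1 ∨ (h ⊓ a) u - (h ⊓ a) v = -1 := by
  simp only [inf_ap]
  omega

lemma sup_step {h a : V → ℤ} {u v : V} (h1 : h u - h v = 1 ∨ h u - h v = -1)
    (h2 : a u - a v = 1 ∨ a u - a v = -1) (h3 : (h u - a u) % 2 = 0) :
    (h ⊔ a) u - (h ⊔ a) v = 1 ∨ (h ⊔ a) u - (h ⊔ a) v = -1 := by
  simp only [sup_ap]
  omega

lemma subgroup_card_ineq {G : Type*} [CommGroup G] (X Y Z : Subgroup G) (hX : X ≤ Z) (hY : Y ≤ Z)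
    [Finite Z] : Nat.card X * Nat.card Y ≤ Nat.card Z * Nat.card (X ⊓ Y : Subgroup G) := by
  have hsup : X ⊔ Y ≤ Z := sup_le hX hY
  have e1 : Nat.card X * X.relIndex (X ⊔ Y) = Nat.card (X ⊔ Y : Subgroup G) := by
    have := Subgroup.relIndex_mul_relIndex ⊥ X (X ⊔ Y) bot_le le_sup_left
    rwa [Subgroup.relIndex_bot_left, Subgroup.relIndex_bot_left] at this
  have e2 : Nat.card (X ⊓ Y : Subgroup G) * X.relIndex Y = Nat.card Y := by
    have := Subgroup.relIndex_mul_relIndex ⊥ (X ⊓ Y) Y bot_le inf_le_right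
    rwa [Subgroup.relIndex_bot_left, Subgroup.relIndex_bot_left, Subgroup.inf_relIndex_right] at this
  rw [Subgroup.relIndex_sup_left] at e1
  have e3 : Nat.card (X ⊔ Y : Subgroup G) ≤ Nat.card Z := by
    exact Nat.card_le_card_of_injective _ (Subgroup.inclusion_injective hsup)
  calc Nat.card X * Nat.card Y = (Nat.card X * X.relIndex Y) * Nat.card (X ⊓ Y : Subgroup G) := by
        rw [← e2]; ring
    _ ≤ _ := by rw [e1]; exact Nat.mul_le_mul_right _ e3

/-- Gauge group of signs, compatible with the set `A` of nonzero even sites. -/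
def KG (N : Finset V) (A : Set V) : Subgroup (V → ℤˣ) where
  carrier := {s | (∀ o : V, (o ∉ N ∨ (o.1 + o.2) % 2 = 0) → s o = 1) ∧
    ∀ v ∈ A, ∀ o o', adj v o → adj v o' → s o = s o'}
  mul_mem' := by
    rintro s t ⟨h1, h2⟩ ⟨h3, h4⟩
    refine ⟨fun o ho => by simp [h1 o ho, h3 o ho], fun v hv o o' h h' => ?_⟩
    simp [h2 v hv o o' h h', h4 v hv o o' h h']
  one_mem' := by simp
  inv_mem' := by
    rintro s ⟨h1, h2⟩
    refine ⟨fun o ho => by simp [h1 o ho], fun v hv o o' h h' => ?_⟩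
    simp [h2 v hv o o' h h']

lemma mem_KG {N : Finset V} {A : Set V} {s : V → ℤˣ} : s ∈ KG N A ↔
    (∀ o : V, (o ∉ N ∨ (o.1 + o.2) % 2 = 0) → s o = 1) ∧
    ∀ v ∈ A, ∀ o o', adj v o → adj v o' → s o = s o' := Iff.rfl

lemma KG_finite (N : Finset V) (A : Set V) : (KG N A : Set (V → ℤˣ)).Finite := by
  classical
  let g : (N → ℤˣ) → V → ℤˣ := fun f v =>
    if hv : v ∈ N then f ⟨v, hv⟩ else 1
  refine (Set.finite_range g).subset ?_
  rintro s ⟨h1, h2⟩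
  refine ⟨fun v => s v.1, ?_⟩
  funext v
  by_cases hv : v ∈ N
  · simp only [g, dif_pos hv]
  · simp only [g, dif_neg hv]
    rw [h1 v (Or.inl hv)]

instance (N : Finset V) (A : Set V) : Finite (KG N A) := KG_finite N A

noncomputable def KF (N : Finset V) (A : Set V) : Finset (V → ℤˣ) := (KG_finite N A).toFinset

lemma mem_KF {N : Finset V} {A : Set V} {s : V → ℤˣ} : s ∈ KF N A ↔ s ∈ KG N A := by
  simp [KF]

lemma KF_card (N : Finset V) (A : Set V) : (KF N A).card = Nat.card (KG N A) := by
  unfold KF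
  exact (Nat.card_eq_card_finite_toFinset (KG_finite N A)).symm

lemma KG_anti {N : Finset V} {A B : Set V} (h : A ⊆ B) : KG N B ≤ KG N A := by
  rintro s ⟨h1, h2⟩
  exact ⟨h1, fun v hv => h2 v (h hv)⟩

lemma KF_ineq (N : Finset V) (A B : Set V) :
    (KF N A).card * (KF N B).card ≤ (KF N (A ∩ B)).card * (KF N (A ∪ B)).card := by
  simp only [KF_card]
  have : KG N (A ∪ B) = KG N A ⊓ KG N B := by
    ext s
    simp only [Subgroup.mem_inf, mem_KG, Set.mem_union]
    constructor
    · rintro ⟨h1, h2⟩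
      exact ⟨⟨h1, fun v hv => h2 v (Or.inl hv)⟩, ⟨h1, fun v hv => h2 v (Or.inr hv)⟩⟩
    · rintro ⟨⟨h1, h2⟩, ⟨h3, h4⟩⟩
      exact ⟨h1, fun v hv => hv.elim (h2 v) (h4 v)⟩
  rw [this]
  exact subgroup_card_ineq _ _ _ (KG_anti Set.inter_subset_left) (KG_anti Set.inter_subset_right)

def rt (v : V) : V := (v.1 + 1, v.2)

lemma adj_rt (v : V) : adj v (rt v) := by simp [adj, rt]

def nz (a : V → ℤ) : Set V := {v | (v.1 + v.2) % 2 = 0 ∧ a v ≠ 0}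

def sig (s : V → ℤˣ) (a : V → ℤ) (v : V) : ℤ :=
  if (v.1 + v.2) % 2 = 0 then (s (rt v) : ℤ) * a v else (s v : ℤ) * a v

lemma units_cases (s : ℤˣ) : (s : ℤ) = 1 ∨ (s : ℤ) = -1 := by
  rcases Int.units_eq_one_or s with h | h <;> simp [h]

lemma adj_parity {u v : V} (h : adj u v) : (u.1 + u.2) % 2 = 0 ∧ (v.1 + v.2) % 2 = 1 ∨
    (u.1 + u.2) % 2 = 1 ∧ (v.1 + v.2) % 2 = 0 := by
  unfold adj at h; omega

lemma sig_OmP {H : ℤ} {E N : Finset V} {a : V → ℤ} (ha : OmP H E N a)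
    {s : V → ℤˣ} (hs : s ∈ KG N (nz a)) : OmP H E N (sig s a) := by
  obtain ⟨h1, h2, h3, h4, h5⟩ := ha
  obtain ⟨hs1, hs2⟩ := hs
  have key : ∀ u v, adj u v → (u.1 + u.2) % 2 = 0 → (v.1 + v.2) % 2 = 1 →
      sig s a u - sig s a v = 1 ∨ sig s a u - sig s a v = -1 := by
    intro u v huv hu hv
    have hv' : ¬ (v.1 + v.2) % 2 = 0 := by omega
    simp only [sig, if_pos hu, if_neg hv']
    have := h1 u v huv
    by_cases h0 : a u = 0
    · rw [h0] at this ⊢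
      rcases units_cases (s v) with e | e <;> rw [e] <;> omega
    · rw [hs2 u ⟨hu, h0⟩ _ _ (adj_rt u) huv]
      rcases units_cases (s v) with e | e <;> rw [e] <;> omega
  refine ⟨?_, ?_, ?_, ?_, ?_⟩
  · intro u v huv
    rcases adj_parity huv with ⟨h, h'⟩ | ⟨h, h'⟩
    · exact key u v huv h h'
    · have := key v u (adj_symm huv) h' h
      omega
  · intro v
    have := h2 v
    unfold sig
    split_ifs
    · rcases units_cases (s (rt v)) with e | e <;> rw [e] <;> omega
    · rcases units_cases (s v) with e | e <;> rw [e] <;> omega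
  · intro v
    have := h3 v
    unfold sig
    split_ifs
    · rcases units_cases (s (rt v)) with e | e <;> rw [e] <;> omega
    · rcases units_cases (s v) with e | e <;> rw [e] <;> omega
  · intro v h0 hv
    simp [sig, h0, h4 v h0 hv]
  · intro v h0 hv
    simp [sig, h0, h5 v h0 hv, hs1 v (Or.inl hv)]

def absf (h : V → ℤ) : V → ℤ := fun v => |h v|

lemma absf_OmP {H : ℤ} {E N : Finset V} {h : V → ℤ} (ha : OmP H E N h) : OmP H E N (absf h) := by
  obtain ⟨h1, h2, h3, h4, h5⟩ := ha
  refine ⟨?_, ?_, ?_, ?_, ?_⟩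
  · intro u v huv
    have a1 := h1 u v huv
    have a2 := h2 u
    have a3 := h2 v
    have a4 := adj_parity huv
    unfold absf
    rcases abs_cases (h u) with ⟨e, _⟩ | ⟨e, _⟩ <;> rcases abs_cases (h v) with ⟨e', _⟩ | ⟨e', _⟩ <;>
      rw [e, e'] <;> omega
  · intro v
    have a2 := h2 v
    unfold absf
    rcases abs_cases (h v) with ⟨e, _⟩ | ⟨e, _⟩ <;> rw [e] <;> omega
  · intro v
    have a2 := h3 v
    unfold absf
    rcases abs_cases (h v) with ⟨e, _⟩ | ⟨e, _⟩ <;> rw [e] <;> omega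
  · intro v h0 hv
    simp [absf, h4 v h0 hv]
  · intro v h0 hv
    simp [absf, h5 v h0 hv]

noncomputable def PO (H : ℤ) (E N : Finset V) : Finset (V → ℤ) := by
  classical exact (Om H E N).filter (fun h => ∀ v, 0 ≤ h v)

lemma mem_PO {H : ℤ} {E N : Finset V} {a : V → ℤ} :
    a ∈ PO H E N ↔ OmP H E N a ∧ ∀ v, 0 ≤ a v := by
  simp [PO]

lemma abs_sig {s : V → ℤˣ} {a : V → ℤ} (ha : ∀ v, 0 ≤ a v) : absf (sig s a) = a := by
  funext v
  unfold absf sig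
  split_ifs
  · rw [abs_mul, abs_of_nonneg (ha v)]
    rcases units_cases (s (rt v)) with e | e <;> simp [e]
  · rw [abs_mul, abs_of_nonneg (ha v)]
    rcases units_cases (s v) with e | e <;> simp [e]

open Classical in
lemma fiber_sum {H : ℤ} {E N : Finset V} (hN : nb E ⊆ N) {a : V → ℤ} (ha : a ∈ PO H E N)
    (F : (V → ℤ) → ℝ) :
    ∑ h ∈ (Om H E N).filter (fun h => absf h = a), F h = ∑ s ∈ KF N (nz a), F (sig s a) := by
  classical
  rw [mem_PO] at ha
  obtain ⟨ha, hpos⟩ := ha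
  have hodd : ∀ v : V, (v.1 + v.2) % 2 = 1 → a v ≠ 0 := by
    intro v hv h0
    have := ha.2.1 v
    omega
  symm
  refine Finset.sum_bij' (fun s _ => sig s a)
    (fun h _ => fun v => if (v.1 + v.2) % 2 = 1 ∧ h v < 0 then -1 else 1) ?_ ?_ ?_ ?_ ?_
  · intro s hs
    rw [mem_KF] at hs
    simp only [Finset.mem_filter, mem_Om]
    exact ⟨sig_OmP ha hs, abs_sig hpos⟩
  · intro h hh
    simp only [Finset.mem_filter, mem_Om] at hh
    obtain ⟨⟨h1, h2, h3, h4, h5⟩, h6⟩ := hh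
    rw [mem_KF]
    refine ⟨?_, ?_⟩
    · rintro o (ho | ho)
      · beta_reduce
        rw [if_neg]
        rintro ⟨q1, q2⟩
        have := h5 o q1 ho
        omega
      · beta_reduce
        rw [if_neg]; omega
    · rintro v ⟨hv, hv'⟩ o o' ho ho'
      have e1 := adj_parity ho
      have e2 := adj_parity ho'
      have e3 := h1 _ _ ho
      have e4 := h1 _ _ ho'
      have e5 := h2 v
      have e6 : h v ≠ 0 := by
        intro h0
        apply hv'
        rw [← h6]
        simp [absf, h0]
      beta_reduce
      by_cases hneg : h o < 0
      · rw [if_pos (by omega), if_pos (by omega)]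
      · rw [if_neg (by omega), if_neg (by omega)]
  · intro s hs
    rw [mem_KF] at hs
    funext v
    have h1 := hs.1 v
    by_cases hv : (v.1 + v.2) % 2 = 0
    · rw [h1 (Or.inr hv), if_neg]; omega
    · have hv' : (v.1 + v.2) % 2 = 1 := by omega
      have := hodd v hv'
      have := hpos v
      simp only [sig, if_neg hv, hv', true_and]
      rcases Int.units_eq_one_or (s v) with e | e
      · rw [e, if_neg]; simp; omega
      · rw [e, if_pos]; simp; omega
  · intro h hh
    simp only [Finset.mem_filter, mem_Om] at hh
    obtain ⟨⟨h1, h2, h3, h4, h5⟩, h6⟩ := hh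
    funext v
    have e6 : a v = |h v| := by rw [← h6]; rfl
    have e7 := h1 _ _ (adj_rt v)
    have e8 := h2 v
    have e9 := adj_parity (adj_rt v)
    unfold sig
    by_cases hv : (v.1 + v.2) % 2 = 0
    · rw [if_pos hv, e6]
      beta_reduce
      by_cases hn : h (rt v) < 0
      · rw [if_pos (by omega), abs_of_nonpos (by omega)]; simp
      · rw [if_neg (by omega), abs_of_nonneg (by omega)]; simp
    · rw [if_neg hv, e6]
      beta_reduce
      by_cases hn : h v < 0
      · rw [if_pos (by omega), abs_of_nonpos (by omega)]; simp
      · rw [if_neg (by omega), abs_of_nonneg (by omega)]; simp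
  · intro s hs
    rfl

lemma char_sum (N : Finset V) (A : Set V) (o o' : V) :
    ∑ s ∈ KF N A, (((s o : ℤˣ) : ℤ) : ℝ) * (((s o' : ℤˣ) : ℤ) : ℝ) =
      (KF N A).card * (open Classical in if ∀ s ∈ KG N A, s o = s o' then (1 : ℝ) else 0) := by
  split_ifs with h
  · rw [mul_one, Finset.card_eq_sum_ones]
    push_cast
    refine Finset.sum_congr rfl fun s hs => ?_
    rw [h s (mem_KF.1 hs)]
    rcases units_cases (s o') with e | e <;> simp [e]
  · push Not at h
    obtain ⟨t, ht, hne⟩ := h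
    have hprod : (((t o : ℤˣ) : ℤ) : ℝ) * (((t o' : ℤˣ) : ℤ) : ℝ) = -1 := by
      rcases Int.units_eq_one_or (t o) with e | e <;>
      rcases Int.units_eq_one_or (t o') with e' | e' <;> simp [e, e'] at hne ⊢
    have : ∑ s ∈ KF N A, (((s o : ℤˣ) : ℤ) : ℝ) * (((s o' : ℤˣ) : ℤ) : ℝ) =
      ∑ s ∈ KF N A, -((((s o : ℤˣ) : ℤ) : ℝ) * (((s o' : ℤˣ) : ℤ) : ℝ)) := by
      refine Finset.sum_bij' (fun s _ => t * s) (fun s _ => t⁻¹ * s) ?_ ?_ ?_ ?_ ?_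
      · intro s hs; rw [mem_KF] at *; exact mul_mem ht hs
      · intro s hs; rw [mem_KF] at *; exact mul_mem (inv_mem ht) hs
      · intro s hs; simp
      · intro s hs; simp
      · intro s hs
        simp only [Pi.mul_apply, Units.val_mul, Int.cast_mul]
        linear_combination ((((s o : ℤˣ) : ℤ) : ℝ) * (((s o' : ℤˣ) : ℤ) : ℝ)) * hprod
    rw [Finset.sum_neg_distrib] at this
    linarith

/-- the monotone functional -/
noncomputable def chi (N : Finset V) (v w : V) (a : V → ℤ) : ℝ :=
  (a v : ℝ) * a w * (open Classical in if ∀ s ∈ KG N (nz a), s (rt v) = s (rt w) then (1 : ℝ) else 0)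

lemma chi_nonneg {N : Finset V} {v w : V} {a : V → ℤ} (ha : ∀ v, 0 ≤ a v) : 0 ≤ chi N v w a := by
  unfold chi
  have h1 : (0 : ℝ) ≤ a v := by exact_mod_cast ha v
  have h2 : (0 : ℝ) ≤ a w := by exact_mod_cast ha w
  split_ifs <;> positivity

lemma chi_mono {N : Finset V} {v w : V} {a b : V → ℤ} (ha : ∀ v, 0 ≤ a v) (hab : a ≤ b) :
    chi N v w a ≤ chi N v w b := by
  have hb : ∀ v, 0 ≤ b v := fun v => (ha v).trans (hab v)
  by_cases h : ∀ s ∈ KG N (nz a), s (rt v) = s (rt w)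
  · have hsub : nz a ⊆ nz b := by
      rintro u ⟨hu, hu'⟩
      refine ⟨hu, ?_⟩
      have := ha u
      have : a u ≤ b u := hab u
      show b u ≠ 0
      omega
    have h' : ∀ s ∈ KG N (nz b), s (rt v) = s (rt w) := fun s hs => h s (KG_anti hsub hs)
    unfold chi
    rw [if_pos h, if_pos h', mul_one, mul_one]
    have h1 : (0 : ℝ) ≤ a v := by exact_mod_cast ha v
    have h2 : (0 : ℝ) ≤ a w := by exact_mod_cast ha w
    have h3 : (a v : ℝ) ≤ b v := by exact_mod_cast hab v
    have h4 : (a w : ℝ) ≤ b w := by exact_mod_cast hab w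
    exact mul_le_mul h3 h4 h2 (h1.trans h3)
  · have : chi N v w a = 0 := by
      unfold chi; rw [if_neg h, mul_zero]
    rw [this]; exact chi_nonneg hb

lemma Om_sum_fiber {H : ℤ} {E N : Finset V} (hN : nb E ⊆ N) (F : (V → ℤ) → ℝ) :
    ∑ h ∈ Om H E N, F h = ∑ a ∈ PO H E N, ∑ s ∈ KF N (nz a), F (sig s a) := by
  classical
  rw [← Finset.sum_fiberwise_of_maps_to (s := Om H E N) (t := PO H E N) (g := absf)]
  · exact Finset.sum_congr rfl fun a ha => fiber_sum hN ha F
  · intro h hh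
    rw [mem_Om] at hh
    rw [mem_PO]
    exact ⟨absf_OmP hh, fun v => abs_nonneg _⟩

lemma Om_sum_phi {H : ℤ} {E N : Finset V} (hN : nb E ⊆ N) {v w : V} (hv : (v.1 + v.2) % 2 = 0)
    (hw : (w.1 + w.2) % 2 = 0) :
    ∑ h ∈ Om H E N, phi h v * phi h w =
      ∑ a ∈ PO H E N, ((KF N (nz a)).card : ℝ) * chi N v w a := by
  rw [Om_sum_fiber hN]
  refine Finset.sum_congr rfl fun a ha => ?_
  have := char_sum N (nz a) (rt v) (rt w)
  unfold chi
  rw [show ∀ x y z c : ℝ, c * (x * y * z) = x * y * (c * z) by intros; ring, ← this,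
    Finset.mul_sum]
  refine Finset.sum_congr rfl fun s hs => ?_
  simp only [phi, sig, if_pos hv, if_pos hw]
  push_cast
  ring

lemma Om_card_fiber {H : ℤ} {E N : Finset V} (hN : nb E ⊆ N) :
    ((Om H E N).card : ℝ) = ∑ a ∈ PO H E N, ((KF N (nz a)).card : ℝ) := by
  have := Om_sum_fiber (H := H) hN (fun _ => 1)
  simpa using this

lemma OmP_inf {H : ℤ} {E E' N : Finset V} {a b : V → ℤ} (ha : a ∈ PO H E N)
    (hb : b ∈ PO H E' N) : a ⊓ b ∈ PO H E N := by
  rw [mem_PO] at *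
  obtain ⟨⟨h1, h2, h3, h4, h5⟩, h6⟩ := ha
  obtain ⟨⟨g1, g2, g3, g4, g5⟩, g6⟩ := hb
  refine ⟨⟨?_, ?_, ?_, ?_, ?_⟩, ?_⟩
  · intro u v huv
    exact inf_step (h1 u v huv) (g1 u v huv) (by have := h2 u; have := g2 u; omega)
  · intro v
    have := h2 v; have := g2 v
    simp only [inf_ap]; omega
  · intro v
    have := h3 v; have := g3 v
    simp only [inf_ap]; omega
  · intro v h0 hv
    have := h4 v h0 hv; have := g6 v
    simp only [inf_ap]; omega
  · intro v h0 hv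
    have := h5 v h0 hv; have := g5 v h0 hv
    simp only [inf_ap]; omega
  · intro v
    have := h6 v; have := g6 v
    simp only [inf_ap]; omega

lemma OmP_sup {H : ℤ} {E E' N : Finset V} (hE : E ⊆ E') {a b : V → ℤ} (ha : a ∈ PO H E N)
    (hb : b ∈ PO H E' N) : a ⊔ b ∈ PO H E' N := by
  rw [mem_PO] at *
  obtain ⟨⟨h1, h2, h3, h4, h5⟩, h6⟩ := ha
  obtain ⟨⟨g1, g2, g3, g4, g5⟩, g6⟩ := hb
  refine ⟨⟨?_, ?_, ?_, ?_, ?_⟩, ?_⟩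
  · intro u v huv
    exact sup_step (h1 u v huv) (g1 u v huv) (by have := h2 u; have := g2 u; omega)
  · intro v
    have := h2 v; have := g2 v
    simp only [sup_ap]; omega
  · intro v
    have := h3 v; have := g3 v
    simp only [sup_ap]; omega
  · intro v h0 hv
    have := h4 v h0 (fun h => hv (hE h)); have := g4 v h0 hv
    simp only [sup_ap]; omega
  · intro v h0 hv
    have := h5 v h0 hv; have := g5 v h0 hv
    simp only [sup_ap]; omega
  · intro v
    have := h6 v; have := g6 v
    simp only [sup_ap]; omega

lemma sum_ind_le {α : Type*} [DecidableEq α] (S P : Finset α) (f : α → ℝ) (hf : ∀ a ∈ P, 0 ≤ f a) :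
    ∑ a ∈ S, (if a ∈ P then f a else 0) ≤ ∑ a ∈ P, f a := by
  rw [← Finset.sum_filter]
  refine Finset.sum_le_sum_of_subset_of_nonneg ?_ ?_
  · intro a ha; exact (Finset.mem_filter.1 ha).2
  · intro a ha _; exact hf a ha

lemma sum_ind_eq {α : Type*} [DecidableEq α] (P : Finset α) (f : α → ℝ) :
    ∑ a ∈ P, (if a ∈ P then f a else 0) = ∑ a ∈ P, f a :=
  Finset.sum_congr rfl fun a ha => if_pos ha

/-- four functions theorem in indicator form -/
lemma four_ind {α : Type*} [DistribLattice α] [DecidableEq α] (P Q R S : Finset α)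
    (f1 f2 f3 f4 : α → ℝ) (h1 : ∀ a ∈ P, 0 ≤ f1 a) (h2 : ∀ a ∈ Q, 0 ≤ f2 a)
    (h3 : ∀ a ∈ R, 0 ≤ f3 a) (h4 : ∀ a ∈ S, 0 ≤ f4 a)
    (h : ∀ a ∈ P, ∀ b ∈ Q, a ⊓ b ∈ R ∧ a ⊔ b ∈ S ∧ f1 a * f2 b ≤ f3 (a ⊓ b) * f4 (a ⊔ b)) :
    (∑ a ∈ P, f1 a) * (∑ a ∈ Q, f2 a) ≤ (∑ a ∈ R, f3 a) * (∑ a ∈ S, f4 a) := by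
  have nn : ∀ (T : Finset α) (f : α → ℝ), (∀ a ∈ T, 0 ≤ f a) →
      0 ≤ (fun a => if a ∈ T then f a else 0) := by
    intro T f hf a
    simp only [Pi.zero_apply]
    split_ifs with ha
    · exact hf a ha
    · exact le_rfl
  have key := four_functions_theorem (fun a => if a ∈ P then f1 a else 0)
    (fun a => if a ∈ Q then f2 a else 0) (fun a => if a ∈ R then f3 a else 0)
    (fun a => if a ∈ S then f4 a else 0) (nn P f1 h1) (nn Q f2 h2) (nn R f3 h3) (nn S f4 h4)
    (by
      intro a b
      by_cases ha : a ∈ P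
      · by_cases hb : b ∈ Q
        · obtain ⟨e1, e2, e3⟩ := h a ha b hb
          simp only [if_pos ha, if_pos hb, if_pos e1, if_pos e2]
          exact e3
        · simp only [if_neg hb, mul_zero]
          exact mul_nonneg (nn R f3 h3 _) (nn S f4 h4 _)
      · simp only [if_neg ha, zero_mul]
        exact mul_nonneg (nn R f3 h3 _) (nn S f4 h4 _)) P Q
  rw [sum_ind_eq, sum_ind_eq] at key
  refine key.trans (mul_le_mul (sum_ind_le _ _ _ h3) (sum_ind_le _ _ _ h4) ?_ ?_)
  · exact Finset.sum_nonneg fun a _ => nn S f4 h4 a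
  · exact Finset.sum_nonneg h3

theorem corr_mono {H : ℤ} (hH : 1 ≤ H) {E E' : Finset V} (hE : E ⊆ E') (v w : V) :
    corr H E v w ≤ corr H E' v w := by
  classical
  by_cases hv : (v.1 + v.2) % 2 = 0
  swap
  · simp [corr, phi, hv, avg]
  by_cases hw : (w.1 + w.2) % 2 = 0
  swap
  · simp [corr, phi, hw, avg]
  have hN : nb E ⊆ nb E' := nb_mono hE
  set N := nb E' with hNdef
  rw [corr_eq hH hN, corr_eq hH (le_refl N)]
  unfold avg
  rw [div_le_div_iff₀ (Om_card_pos hH _ _) (Om_card_pos hH _ _), Om_sum_phi hN hv hw,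
    Om_sum_phi le_rfl hv hw, Om_card_fiber hN, Om_card_fiber (le_refl N)]
  rw [mul_comm (∑ a ∈ PO H E' N, _ * chi N v w a)]
  have cn : ∀ (E : Finset V), ∀ a ∈ PO H E N, 0 ≤ ((KF N (nz a)).card : ℝ) * chi N v w a := by
    intro E a ha
    exact mul_nonneg (Nat.cast_nonneg _) (chi_nonneg (mem_PO.1 ha).2)
  refine four_ind _ _ _ _ _ _ _ _ (cn E) (fun _ _ => Nat.cast_nonneg _)
    (fun _ _ => Nat.cast_nonneg _) (cn E') ?_
  intro a ha b hb
  refine ⟨OmP_inf ha hb, OmP_sup hE ha hb, ?_⟩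
  have pa := (mem_PO.1 ha).2
  have pb := (mem_PO.1 hb).2
  have e1 : nz (a ⊓ b) = nz a ∩ nz b := by
    ext u
    have := pa u; have := pb u
    simp only [nz, Set.mem_setOf_eq, Set.mem_inter_iff, inf_ap]
    omega
  have e2 : nz (a ⊔ b) = nz a ∪ nz b := by
    ext u
    have := pa u; have := pb u
    simp only [nz, Set.mem_setOf_eq, Set.mem_union, sup_ap]
    omega
  have k1 : ((KF N (nz a)).card : ℝ) * (KF N (nz b)).card ≤
      (KF N (nz (a ⊓ b))).card * (KF N (nz (a ⊔ b))).card := by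
    rw [e1, e2]; exact_mod_cast KF_ineq N (nz a) (nz b)
  have k2 : chi N v w a ≤ chi N v w (a ⊔ b) := chi_mono pa le_sup_left
  have k3 : 0 ≤ chi N v w a := chi_nonneg pa
  calc _ = ((KF N (nz a)).card : ℝ) * (KF N (nz b)).card * chi N v w a := by ring
    _ ≤ (KF N (nz (a ⊓ b))).card * (KF N (nz (a ⊔ b))).card * chi N v w (a ⊔ b) :=
      mul_le_mul k1 k2 k3 (by positivity)
    _ = _ := by ring
end

section
open Filter Topology
structure IsAut (σ : V ≃ V) : Prop where
  adj : ∀ u v, adj (σ u) (σ v) ↔ adj u v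
  par : ∀ v : V, ((σ v).1 + (σ v).2) % 2 = (v.1 + v.2) % 2

lemma IsAut.symm {σ : V ≃ V} (h : IsAut σ) : IsAut σ.symm := by
  refine ⟨fun u v => ?_, fun v => ?_⟩
  · rw [← h.adj]; simp
  · rw [← h.par]; simp

lemma OmP_comp {H : ℤ} {E N : Finset V} {σ : V ≃ V} (hσ : IsAut σ) {h : V → ℤ}
    (hh : OmP H (E.map σ.toEmbedding) (N.map σ.toEmbedding) h) : OmP H E N (h ∘ σ) := by
  obtain ⟨h1, h2, h3, h4, h5⟩ := hh
  refine ⟨?_, ?_, ?_, ?_, ?_⟩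
  · intro u v huv
    exact h1 _ _ ((hσ.adj u v).2 huv)
  · intro v
    have := h2 (σ v); have := hσ.par v
    simp only [Function.comp]; omega
  · intro v; exact h3 _
  · intro v h0 hv
    exact h4 (σ v) (by rw [hσ.par, h0]) (by simpa using hv)
  · intro v h0 hv
    exact h5 (σ v) (by rw [hσ.par, h0]) (by simpa using hv)

lemma map_map_symm (E : Finset V) (σ : V ≃ V) :
    (E.map σ.toEmbedding).map σ.symm.toEmbedding = E := by
  ext v; simp

lemma OmP_comp_symm {H : ℤ} {E N : Finset V} {σ : V ≃ V} (hσ : IsAut σ) {h : V → ℤ}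
    (hh : OmP H E N h) : OmP H (E.map σ.toEmbedding) (N.map σ.toEmbedding) (h ∘ σ.symm) := by
  apply OmP_comp hσ.symm
  rwa [map_map_symm, map_map_symm]

lemma sum_comp {H : ℤ} {E N : Finset V} {σ : V ≃ V} (hσ : IsAut σ) (F : (V → ℤ) → ℝ) :
    ∑ h ∈ Om H (E.map σ.toEmbedding) (N.map σ.toEmbedding), F (h ∘ σ) = ∑ h ∈ Om H E N, F h := by
  refine Finset.sum_nbij' (fun h => h ∘ σ) (fun h => h ∘ σ.symm) ?_ ?_ ?_ ?_ ?_
  · intro h hh; rw [mem_Om] at *; exact OmP_comp hσ hh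
  · intro h hh; rw [mem_Om] at *; exact OmP_comp_symm hσ hh
  · intro h _; funext v; simp
  · intro h _; funext v; simp
  · intro h _; rfl

lemma nb_map {σ : V ≃ V} (hσ : IsAut σ) (E : Finset V) :
    nb (E.map σ.toEmbedding) = (nb E).map σ.toEmbedding := by
  ext u
  simp only [mem_nb, Finset.mem_map, Equiv.coe_toEmbedding]
  constructor
  · rintro ⟨_, ⟨v, hv, rfl⟩, h⟩
    refine ⟨σ.symm u, ⟨v, hv, ?_⟩, by simp⟩
    rw [← hσ.adj]; simpa using h
  · rintro ⟨u, ⟨v, hv, h⟩, rfl⟩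
    exact ⟨_, ⟨v, hv, rfl⟩, (hσ.adj _ _).2 h⟩

lemma phi_comp {σ : V ≃ V} (hσ : IsAut σ) (h : V → ℤ) (v : V) :
    phi h (σ v) = phi (h ∘ σ) v := by
  unfold phi
  rw [hσ.par]; rfl

lemma corr_map {H : ℤ} {σ : V ≃ V} (hσ : IsAut σ) (E : Finset V) (v w : V) :
    corr H (E.map σ.toEmbedding) (σ v) (σ w) = corr H E v w := by
  unfold corr avg
  rw [nb_map hσ]
  simp only [phi_comp hσ]
  rw [sum_comp hσ (fun h => phi h v * phi h w)]
  have := sum_comp (H := H) (E := E) (N := nb E) hσ (fun _ => 1)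
  simp only [Finset.sum_const, nsmul_eq_mul, mul_one] at this
  rw [this]

lemma avg_le {S : Finset (V → ℤ)} {f : (V → ℤ) → ℝ} {c : ℝ} (hc : 0 ≤ c)
    (hf : ∀ h ∈ S, f h ≤ c) : avg S f ≤ c := by
  unfold avg
  rcases S.eq_empty_or_nonempty with rfl | hS
  · simpa using hc
  rw [div_le_iff₀ (by exact_mod_cast hS.card_pos)]
  calc _ ≤ ∑ h ∈ S, c := Finset.sum_le_sum hf
    _ = _ := by rw [Finset.sum_const, nsmul_eq_mul]; ring

lemma avg_nonneg {S : Finset (V → ℤ)} {f : (V → ℤ) → ℝ} (hf : ∀ h ∈ S, 0 ≤ f h) : 0 ≤ avg S f :=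
  div_nonneg (Finset.sum_nonneg hf) (Nat.cast_nonneg _)

lemma abs_phi_le {H : ℤ} (hH : 1 ≤ H) {E N : Finset V} {h : V → ℤ} (hh : OmP H E N h) (v : V) :
    |phi h v| ≤ H := by
  unfold phi
  split_ifs
  · rw [abs_le]
    obtain ⟨h1, h2⟩ := hh.2.2.1 v
    exact ⟨by exact_mod_cast h1, by exact_mod_cast h2⟩
  · rw [abs_zero]; exact_mod_cast (by omega : (0 : ℤ) ≤ H)

lemma corr_le {H : ℤ} (hH : 1 ≤ H) (E : Finset V) (v w : V) : corr H E v w ≤ (H : ℝ) ^ 2 := by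
  refine avg_le (by positivity) ?_
  intro h hh
  rw [mem_Om] at hh
  have a1 := abs_phi_le hH hh v
  have a2 := abs_phi_le hH hh w
  calc _ ≤ |phi h v * phi h w| := le_abs_self _
    _ = |phi h v| * |phi h w| := abs_mul _ _
    _ ≤ H * H := mul_le_mul a1 a2 (abs_nonneg _) ((abs_nonneg _).trans a1)
    _ = _ := by ring

noncomputable def GG (H : ℤ) (v w : V) : ℝ := ⨆ E : Finset V, corr H E v w

lemma corr_tendsto {H : ℤ} (hH : 1 ≤ H) (v w : V) :
    Tendsto (fun E => corr H E v w) atTop (𝓝 (GG H v w)) := by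
  refine tendsto_atTop_ciSup (fun E E' h => corr_mono hH h v w) ⟨(H : ℝ) ^ 2, ?_⟩
  rintro _ ⟨E, rfl⟩
  exact corr_le hH E v w

lemma GG_map {H : ℤ} {σ : V ≃ V} (hσ : IsAut σ) (v w : V) :
    GG H (σ v) (σ w) = GG H v w := by
  unfold GG
  have hs : Function.Surjective (fun E : Finset V => E.map σ.toEmbedding) := by
    intro E
    refine ⟨E.map σ.symm.toEmbedding, ?_⟩
    ext v; simp
  rw [← hs.iSup_comp]
  simp only [corr_map hσ]

abbrev W := V →₀ ℝ

noncomputable def BE (H : ℤ) (E : Finset V) : W →ₗ[ℝ] W →ₗ[ℝ] ℝ :=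
  Finsupp.linearCombination ℝ (fun v => Finsupp.linearCombination ℝ (fun w => corr H E v w))

noncomputable def BB (H : ℤ) : W →ₗ[ℝ] W →ₗ[ℝ] ℝ :=
  Finsupp.linearCombination ℝ (fun v => Finsupp.linearCombination ℝ (fun w => GG H v w))

noncomputable def LL (h : V → ℤ) : W →ₗ[ℝ] ℝ := Finsupp.linearCombination ℝ (phi h)

noncomputable def de (v : V) : W := Finsupp.single v 1

lemma LL_de (h : V → ℤ) (v : V) : LL h (de v) = phi h v := by
  simp [LL, de]

lemma BE_tendsto {H : ℤ} (hH : 1 ≤ H) (F F' : W) :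
    Tendsto (fun E => BE H E F F') atTop (𝓝 (BB H F F')) := by
  simp only [BE, BB, Finsupp.linearCombination_apply, Finsupp.sum, LinearMap.sum_apply,
    LinearMap.smul_apply, smul_eq_mul]
  refine tendsto_finsetSum _ fun v _ => Tendsto.const_mul _ ?_
  exact tendsto_finsetSum _ fun w _ => Tendsto.const_mul _ (corr_tendsto hH v w)

lemma avg_add (S : Finset (V → ℤ)) (f g : (V → ℤ) → ℝ) :
    avg S (fun h => f h + g h) = avg S f + avg S g := by
  unfold avg
  rw [Finset.sum_add_distrib, add_div]

lemma avg_mul (S : Finset (V → ℤ)) (c : ℝ) (f : (V → ℤ) → ℝ) :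
    avg S (fun h => c * f h) = c * avg S f := by
  unfold avg
  rw [← Finset.mul_sum, mul_div_assoc]

lemma BE_eq (H : ℤ) (E : Finset V) (F F' : W) :
    BE H E F F' = avg (Om H E (nb E)) (fun h => LL h F * LL h F') := by
  induction F using Finsupp.induction_linear with
  | zero => simp [avg]
  | add f g hf hg =>
    simp only [map_add, LinearMap.add_apply, hf, hg, add_mul]
    rw [avg_add]
  | single v c =>
    induction F' using Finsupp.induction_linear with
    | zero => simp [avg]
    | add f g hf hg =>
      simp only [map_add, hf, hg, mul_add]
      rw [avg_add]
    | single w d =>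
      simp only [BE, LL, Finsupp.linearCombination_single, LinearMap.smul_apply, smul_eq_mul, corr]
      rw [← avg_mul, ← avg_mul]
      congr 1; funext h; ring

lemma BE_eq' {H : ℤ} (hH : 1 ≤ H) {E N : Finset V} (hN : nb E ⊆ N) (F F' : W) :
    BE H E F F' = avg (Om H E N) (fun h => LL h F * LL h F') := by
  rw [BE_eq, avg_indep hH hN]
  intro h h' hh
  have : LL h = LL h' := by
    unfold LL
    congr 1
    funext v
    exact phi_congr hh v
  simp only [this]

lemma BB_nonneg {H : ℤ} (hH : 1 ≤ H) (F : W) : 0 ≤ BB H F F := by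
  refine ge_of_tendsto' (BE_tendsto hH F F) fun E => ?_
  rw [BE_eq]
  exact avg_nonneg fun h _ => mul_self_nonneg _

lemma BB_symm {H : ℤ} (hH : 1 ≤ H) (F F' : W) : BB H F F' = BB H F' F := by
  refine tendsto_nhds_unique (BE_tendsto hH F F') ?_
  have := BE_tendsto hH F' F
  refine this.congr fun E => ?_
  rw [BE_eq, BE_eq]
  congr 1; funext h; ring

lemma BB_le {H : ℤ} (hH : 1 ≤ H) (F : W) (c : ℝ) (hc : 0 ≤ c)
    (h : ∀ E N h, OmP H E N h → LL h F * LL h F ≤ c) : BB H F F ≤ c := by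
  refine le_of_tendsto' (BE_tendsto hH F F) fun E => ?_
  rw [BE_eq]
  exact avg_le hc fun h' hh => h _ _ h' (by simpa using hh)

noncomputable def TT (σ : V ≃ V) : W →ₗ[ℝ] W := Finsupp.lmapDomain ℝ ℝ σ

lemma TT_de (σ : V ≃ V) (v : V) : TT σ (de v) = de (σ v) := by
  simp [TT, de, Finsupp.mapDomain_single]

lemma TT_single (σ : V ≃ V) (v : V) (c : ℝ) :
    TT σ (Finsupp.single v c) = Finsupp.single (σ v) c := by
  simp [TT, Finsupp.mapDomain_single]

lemma BB_TT {H : ℤ} {σ : V ≃ V} (hσ : IsAut σ) (F F' : W) :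
    BB H (TT σ F) (TT σ F') = BB H F F' := by
  induction F using Finsupp.induction_linear with
  | zero => simp
  | add f g hf hg => simp only [map_add, LinearMap.add_apply, hf, hg]
  | single v c =>
    induction F' using Finsupp.induction_linear with
    | zero => simp
    | add f g hf hg => simp only [map_add, hf, hg]
    | single w d =>
      simp only [TT_single, BB, Finsupp.linearCombination_single, LinearMap.smul_apply, GG_map hσ]

lemma LL_TT {σ : V ≃ V} (hσ : IsAut σ) (F : W) (h : V → ℤ) :
    LL h (TT σ F) = LL (h ∘ σ) F := by
  induction F using Finsupp.induction_linear with
  | zero => simp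
  | add f g hf hg => simp only [map_add, hf, hg]
  | single v c =>
    simp only [TT_single, LL, Finsupp.linearCombination_single, phi_comp hσ]

/-! ### Reflection positivity -/

structure Refl where
  θ : V ≃ V
  ℓ : V → ℤ
  a : ℤ
  aut : IsAut θ
  inv : ∀ v, θ (θ v) = v
  side : ∀ v, ℓ (θ v) = 2 * a - ℓ v
  fix : ∀ v, ℓ v = a → θ v = v
  lip : ∀ u v, adj u v → ℓ u - ℓ v ≤ 1 ∧ ℓ v - ℓ u ≤ 1

def glue (R : Refl) (p q : V → ℤ) (v : V) : ℤ := if R.ℓ v ≤ R.a then p v else q v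

lemma glue_OmP {H : ℤ} {E N : Finset V} (R : Refl) {p q : V → ℤ} (hp : OmP H E N p)
    (hq : OmP H E N q) (h : ∀ v, R.ℓ v = R.a → p v = q v) : OmP H E N (glue R p q) := by
  refine ⟨?_, ?_, ?_, ?_, ?_⟩
  · intro u v huv
    have hl := R.lip u v huv
    unfold glue
    by_cases hu : R.ℓ u ≤ R.a
    · by_cases hv : R.ℓ v ≤ R.a
      · rw [if_pos hu, if_pos hv]; exact hp.1 u v huv
      · rw [if_pos hu, if_neg hv, h u (by omega)]; exact hq.1 u v huv
    · by_cases hv : R.ℓ v ≤ R.a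
      · rw [if_neg hu, if_pos hv, h v (by omega)]; exact hq.1 u v huv
      · rw [if_neg hu, if_neg hv]; exact hq.1 u v huv
  · intro v; unfold glue; split_ifs
    · exact hp.2.1 v
    · exact hq.2.1 v
  · intro v; unfold glue; split_ifs
    · exact hp.2.2.1 v
    · exact hq.2.2.1 v
  · intro v; unfold glue; split_ifs
    · exact hp.2.2.2.1 v
    · exact hq.2.2.2.1 v
  · intro v; unfold glue; split_ifs
    · exact hp.2.2.2.2 v
    · exact hq.2.2.2.2 v

lemma kernel_nonneg {α β : Type*} [DecidableEq β] (S : Finset α) (r : α → β) (f : α → ℝ) :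
    0 ≤ ∑ x ∈ (S ×ˢ S).filter (fun x => r x.1 = r x.2), f x.1 * f x.2 := by
  rw [Finset.sum_filter, Finset.sum_product]
  have : ∀ p ∈ S, ∑ q ∈ S, (if r p = r q then f p * f q else 0) =
      f p * ∑ q ∈ S.filter (fun q => r q = r p), f q := by
    intro p _
    rw [Finset.mul_sum, Finset.sum_filter]
    refine Finset.sum_congr rfl fun q _ => ?_
    simp only [eq_comm]
  rw [Finset.sum_congr rfl this,
    ← Finset.sum_fiberwise_of_maps_to (s := S) (t := S.image r) (g := r)
      (fun i hi => Finset.mem_image_of_mem r hi)]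
  refine Finset.sum_nonneg fun ξ _ => ?_
  have : ∑ p ∈ S.filter (fun p => r p = ξ), f p * ∑ q ∈ S.filter (fun q => r q = r p), f q =
      (∑ p ∈ S.filter (fun p => r p = ξ), f p) * (∑ p ∈ S.filter (fun p => r p = ξ), f p) := by
    rw [Finset.sum_mul]
    refine Finset.sum_congr rfl fun p hp => ?_
    rw [(Finset.mem_filter.1 hp).2]
  rw [this]
  exact mul_self_nonneg _

lemma rp_finite {H : ℤ} {E N : Finset V} (R : Refl)
    (hEN : ∀ h, OmP H E N h → OmP H E N (h ∘ R.θ))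
    (f : (V → ℤ) → ℝ) (hf : ∀ h h', (∀ v, R.ℓ v ≤ R.a → h v = h' v) → f h = f h') :
    0 ≤ ∑ h ∈ Om H E N, f h * f (h ∘ R.θ) := by
  classical
  let r : (V → ℤ) → V → ℤ := fun h v => if R.ℓ v = R.a then h v else 0
  have hr : ∀ p q, r p = r q ↔ ∀ v, R.ℓ v = R.a → p v = q v := by
    intro p q
    constructor
    · intro h v hv
      have := congrFun h v
      simpa [r, hv] using this
    · intro h; funext v
      simp only [r]
      split_ifs with hv
      · exact h v hv
      · rfl
  set S := (Om H E N).filter (fun h => h ∘ R.θ = h) with hS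
  have key := kernel_nonneg S r f
  convert key using 1
  have hfold : ∀ h, OmP H E N h → OmP H E N (glue R h (h ∘ R.θ)) := fun h hh =>
    glue_OmP R hh (hEN h hh) fun v hv => by simp [R.fix v hv]
  have hsym : ∀ h, (glue R h (h ∘ R.θ)) ∘ R.θ = glue R h (h ∘ R.θ) := by
    intro h; funext v
    simp only [glue, Function.comp, R.inv, R.side]
    split_ifs with h1 h2 h2
    · rw [R.fix v (by omega)]
    · rfl
    · rfl
    · omega
  have hcc : ∀ h : V → ℤ, (h ∘ R.θ) ∘ R.θ = h := by
    intro h; funext v; simp [R.inv]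
  refine Finset.sum_bij' (fun h _ => (glue R h (h ∘ R.θ), glue R (h ∘ R.θ) ((h ∘ R.θ) ∘ R.θ)))
    (fun x _ => glue R x.1 x.2) ?_ ?_ ?_ ?_ ?_
  · intro h hh
    rw [mem_Om] at hh
    simp only [Finset.mem_filter, Finset.mem_product, hS, mem_Om]
    refine ⟨⟨⟨hfold h hh, hsym h⟩, ⟨hfold _ (hEN h hh), hsym _⟩⟩, ?_⟩
    rw [hr]
    intro v hv
    simp [glue, hv, R.fix v hv]
  · rintro ⟨p, q⟩ hx
    simp only [Finset.mem_filter, Finset.mem_product, hS, mem_Om] at hx ⊢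
    exact glue_OmP R hx.1.1.1 hx.1.2.1 ((hr _ _).1 hx.2)
  · intro h hh
    funext v
    simp only [glue, hcc]
    split_ifs <;> rfl
  · rintro ⟨p, q⟩ hx
    simp only [Finset.mem_filter, Finset.mem_product, hS, mem_Om] at hx
    obtain ⟨⟨⟨_, hp⟩, ⟨_, hq⟩⟩, h3⟩ := hx
    rw [hr] at h3
    have hp' : ∀ v, p (R.θ v) = p v := fun v => congrFun hp v
    have hq' : ∀ v, q (R.θ v) = q v := fun v => congrFun hq v
    refine Prod.ext ?_ ?_
    · funext v
      simp only [glue, Function.comp, R.side]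
      split_ifs
      · rfl
      · exact hp' v
      · omega
    · funext v
      simp only [glue, Function.comp, R.side, R.inv]
      split_ifs
      · have hv : R.ℓ v = R.a := by omega
        rw [R.fix v hv]; exact h3 v hv
      · exact hq' v
      · rfl
  · intro h hh
    have e1 : f h = f (glue R h (h ∘ R.θ)) := hf _ _ fun v hv => by simp [glue, hv]
    have e2 : f (h ∘ R.θ) = f (glue R (h ∘ R.θ) ((h ∘ R.θ) ∘ R.θ)) :=
      hf _ _ fun v hv => by simp [glue, hv]
    rw [← e1, ← e2]

lemma LL_congr {F : W} {h h' : V → ℤ} (hh : ∀ v ∈ F.support, h v = h' v) : LL h F = LL h' F := by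
  simp only [LL, Finsupp.linearCombination_apply, Finsupp.sum]
  refine Finset.sum_congr rfl fun v hv => ?_
  unfold phi
  rw [hh v hv]

theorem rp {H : ℤ} (hH : 1 ≤ H) (R : Refl) (F : W) (hF : ∀ v ∈ F.support, R.ℓ v ≤ R.a) :
    0 ≤ BB H F (TT R.θ F) := by
  classical
  have ht : Tendsto (fun E : Finset V => E ∪ E.map R.θ.toEmbedding) atTop atTop :=
    tendsto_atTop_mono (fun E => Finset.subset_union_left) tendsto_id
  refine ge_of_tendsto' ((BE_tendsto hH F (TT R.θ F)).comp ht) fun E => ?_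
  simp only [Function.comp]
  set E' := E ∪ E.map R.θ.toEmbedding with hE'
  have hinv : E'.map R.θ.toEmbedding = E' := by
    have : (E.map R.θ.toEmbedding).map R.θ.toEmbedding = E := by
      rw [Finset.map_map]
      ext v
      simp [R.inv]
    rw [hE', Finset.map_union, this, Finset.union_comm]
  have hinv2 : (nb E').map R.θ.toEmbedding = nb E' := by
    rw [← nb_map R.aut, hinv]
  rw [BE_eq]
  simp only [LL_TT R.aut]
  refine div_nonneg ?_ (Nat.cast_nonneg _)
  refine rp_finite R ?_ (fun h => LL h F) ?_
  · intro h hh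
    apply OmP_comp R.aut
    rwa [hinv, hinv2]
  · intro h h' hh
    exact LL_congr fun v hv => hh v (hF v hv)
end

section
open Filter Topology
section dec
variable {M : Type*} [AddCommGroup M] [Module ℝ M]

lemma dec_decay (c k d : ℕ → ℝ) (hd : ∀ r, d r = c r - c (r + 1))
    (hk : ∀ r, k (r + 1) = d r - d (r + 1)) (hk0 : ∀ r, 0 ≤ k (r + 1)) (hc : ∀ r, c r ≤ c 0)
    (R : ℕ) : ∑ r ∈ Finset.range R, k (r + 1) ≤ d 0 := by
  have h1 : ∑ r ∈ Finset.range R, k (r + 1) = d 0 - d R := by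
    simp only [hk]
    exact Finset.sum_range_sub' d R
  have anti : Antitone d := antitone_nat_of_succ_le fun r => by
    have := hk r; have := hk0 r; linarith
  have h2 : 0 ≤ d R := by
    by_contra hneg
    push Not at hneg
    have h3 : ∀ n : ℕ, c R - n * d R ≤ c (R + n) := by
      intro n
      induction n with
      | zero => simp
      | succ n ih =>
        have e1 := hd (R + n)
        have e2 : d (R + n) ≤ d R := anti (Nat.le_add_right _ _)
        rw [show R + (n + 1) = R + n + 1 by ring]
        push_cast
        linarith
    obtain ⟨n, hn⟩ := exists_nat_gt ((c 0 - c R) / (-d R))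
    rw [div_lt_iff₀ (by linarith)] at hn
    have := h3 n
    have := hc (R + n)
    linarith
  linarith

lemma dec_abs (B : M →ₗ[ℝ] M →ₗ[ℝ] ℝ) (hpos : ∀ F, 0 ≤ B F F) (hsymm : ∀ F F', B F F' = B F' F)
    (T : ℕ → M →ₗ[ℝ] M) (hT0 : ∀ F, T 0 F = F) (hT1 : ∀ r F, T r (T 1 F) = T (r + 1) F)
    (hiso : ∀ r F F', B (T 1 F) (T (r + 1) F') = B F (T r F'))
    (hiso' : ∀ r F, B (T r F) (T r F) = B F F)
    (Y X : ℕ → M) (hX : ∀ i, X i = Y i - T 1 (Y i))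
    (hk : ∀ i r, 0 ≤ - B (X i) (T (r + 1) (X i)))
    (hx : ∀ i i', i < i' → 2 * B (X i) (X i') ≤ - B (X i) (T (i' - i) (X i)) -
      B (X i') (T (i' - i) (X i'))) (n : ℕ) :
    B (∑ i ∈ Finset.range n, X i) (∑ i ∈ Finset.range n, X i) ≤
      2 * ∑ i ∈ Finset.range n, B (X i) (X i) := by
  set k : ℕ → ℕ → ℝ := fun i r => - B (X i) (T r (X i)) with hkdef
  have hp : ∀ i R, ∑ r ∈ Finset.range R, k i (r + 1) ≤ B (X i) (X i) / 2 := by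
    intro i R
    set c : ℕ → ℝ := fun r => B (Y i) (T r (Y i)) with hc
    set d : ℕ → ℝ := fun r => c r - c (r + 1) with hd
    have h0 : d 0 = B (X i) (X i) / 2 := by
      have e1 := hiso 0 (Y i) (Y i)
      have e2 := hsymm (T 1 (Y i)) (Y i)
      simp only [zero_add, hT0] at e1
      simp only [hd, hc, hX, map_sub, LinearMap.sub_apply, hT0, zero_add]
      linarith
    rw [← h0]
    refine dec_decay c (k i) d (fun _ => rfl) ?_ (hk i) ?_ R
    · intro r
      have e1 := hiso r (Y i) (Y i)
      have e2 := hiso (r + 1) (Y i) (Y i)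
      simp only [hkdef, hd, hc, hX, map_sub, LinearMap.sub_apply, hT1]
      linarith
    · intro r
      have := hpos (Y i - T r (Y i))
      have e1 := hiso' r (Y i)
      have e2 := hsymm (T r (Y i)) (Y i)
      simp only [map_sub, LinearMap.sub_apply] at this
      simp only [hc, hT0]
      linarith
  have main : ∀ n, B (∑ i ∈ Finset.range n, X i) (∑ i ∈ Finset.range n, X i) ≤
      ∑ i ∈ Finset.range n, (3 / 2 * B (X i) (X i) +
        ∑ r ∈ Finset.range (n - 1 - i), k i (r + 1)) := by
    intro n
    induction n with
    | zero => simp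
    | succ n ih =>
      rw [Finset.sum_range_succ, Finset.sum_range_succ]
      simp only [map_add, LinearMap.add_apply, add_tsub_cancel_right, tsub_self, Finset.range_zero,
        Finset.sum_empty, add_zero]
      set S := ∑ i ∈ Finset.range n, X i with hS
      have e1 : B (X n) S = B S (X n) := hsymm _ _
      have e2 : B S (X n) = ∑ i ∈ Finset.range n, B (X i) (X n) := by
        rw [hS, map_sum, LinearMap.sum_apply]
      have e3 : 2 * B S (X n) ≤ ∑ i ∈ Finset.range n, k i (n - i) +
          ∑ i ∈ Finset.range n, k n (n - i) := by
        rw [e2, Finset.mul_sum, ← Finset.sum_add_distrib]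
        refine Finset.sum_le_sum fun i hi => ?_
        have := hx i n (Finset.mem_range.1 hi)
        simp only [hkdef]
        linarith
      have e4 : ∑ i ∈ Finset.range n, k n (n - i) = ∑ r ∈ Finset.range n, k n (r + 1) := by
        rw [← Finset.sum_range_reflect]
        refine Finset.sum_congr rfl fun i hi => ?_
        rw [Finset.mem_range] at hi
        congr 1; omega
      have e5 := hp n n
      have e6 : ∑ i ∈ Finset.range n, (3 / 2 * B (X i) (X i) +
          ∑ r ∈ Finset.range (n - i), k i (r + 1)) = ∑ i ∈ Finset.range n, (3 / 2 * B (X i) (X i) +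
        ∑ r ∈ Finset.range (n - 1 - i), k i (r + 1)) + ∑ i ∈ Finset.range n, k i (n - i) := by
        rw [← Finset.sum_add_distrib]
        refine Finset.sum_congr rfl fun i hi => ?_
        rw [Finset.mem_range] at hi
        rw [show n - i = (n - 1 - i) + 1 by omega, Finset.sum_range_succ]
        ring
      rw [e6]
      linarith
  refine (main n).trans ?_
  rw [Finset.mul_sum]
  refine Finset.sum_le_sum fun i _ => ?_
  have := hp i (n - 1 - i)
  linarith

end dec

def sh (a b : ℤ) : V ≃ V where
  toFun v := (v.1 + a, v.2 + b)
  invFun v := (v.1 - a, v.2 - b)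
  left_inv v := by simp
  right_inv v := by simp

lemma sh_apply (a b : ℤ) (v : V) : sh a b v = (v.1 + a, v.2 + b) := rfl

lemma sh_aut {a b : ℤ} (h : (a + b) % 2 = 0) : IsAut (sh a b) := by
  refine ⟨fun u v => ?_, fun v => ?_⟩
  · simp only [adj, sh_apply]
    rw [show u.1 + a - (v.1 + a) = u.1 - v.1 by ring, show u.2 + b - (v.2 + b) = u.2 - v.2 by ring]
  · simp only [sh_apply]; omega

lemma TT_comp (σ τ : V ≃ V) (F : W) : TT σ (TT τ F) = TT (τ.trans σ) F := by
  simp only [TT, Finsupp.lmapDomain_apply]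
  rw [← Finsupp.mapDomain_comp]; rfl

lemma TT_refl (F : W) : TT (Equiv.refl V) F = F := by
  simp only [TT, Finsupp.lmapDomain_apply]
  exact Finsupp.mapDomain_id

lemma BB_TT_left {H : ℤ} (R : Refl) (F F' : W) : BB H (TT R.θ F) F' = BB H F (TT R.θ F') := by
  rw [← BB_TT R.aut F, TT_comp]
  congr 1
  have : R.θ.trans R.θ = Equiv.refl V := by ext v <;> simp [R.inv]
  rw [this, TT_refl]

lemma mem_supp_TT {R : Refl} {F : W} (hF : ∀ v ∈ F.support, R.a ≤ R.ℓ v) :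
    ∀ v ∈ (TT R.θ F).support, R.ℓ v ≤ R.a := by
  classical
  intro v hv
  have := Finsupp.mapDomain_support hv
  rw [Finset.mem_image] at this
  obtain ⟨u, hu, rfl⟩ := this
  have := hF u hu
  rw [R.side]; omega

lemma supp_le (S : Set V) (F : W) (h : F ∈ Finsupp.supported ℝ ℝ S) : ∀ v ∈ F.support, v ∈ S :=
  fun _ hv => (Finsupp.mem_supported ℝ F).1 h hv

theorem dec_rp {H : ℤ} (hH : 1 ≤ H) (t1 t2 : ℤ) (ht : (t1 + t2) % 2 = 0) {ι : Type*} (J : Finset ι)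
    (p : ℕ → ι → V) (f : ℕ → ι → ℝ) (R : ℕ → ℕ → Refl)
    (h1 : ∀ (i r : ℕ) (j : ι), 1 ≤ r → (R i r).θ (p i j) = sh ((r + 1 : ℕ) * t1) ((r + 1 : ℕ) * t2) (p i j))
    (h2 : ∀ (i r : ℕ) (j : ι), 1 ≤ r → (R i r).θ (sh t1 t2 (p i j)) = sh (r * t1) (r * t2) (p i j))
    (h3 : ∀ i r j, 1 ≤ r → (R i r).ℓ (p i j) ≤ (R i r).a ∧
      (R i r).ℓ (sh t1 t2 (p i j)) ≤ (R i r).a)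
    (h4 : ∀ (i r : ℕ) (j : ι), 1 ≤ r → sh (r * t1) (r * t2) ((R i r).θ (p (i + r) j)) = sh t1 t2 (p (i + r) j))
    (h5 : ∀ (i r : ℕ) (j : ι), 1 ≤ r → sh (r * t1) (r * t2) ((R i r).θ (sh t1 t2 (p (i + r) j))) = p (i + r) j)
    (h6 : ∀ i r j, 1 ≤ r → (R i r).a ≤ (R i r).ℓ (p (i + r) j) ∧
      (R i r).a ≤ (R i r).ℓ (sh t1 t2 (p (i + r) j))) (n : ℕ) :
    BB H (∑ i ∈ Finset.range n, ∑ j ∈ J, f i j • (de (p i j) - de (sh t1 t2 (p i j))))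
      (∑ i ∈ Finset.range n, ∑ j ∈ J, f i j • (de (p i j) - de (sh t1 t2 (p i j)))) ≤
    2 * ∑ i ∈ Finset.range n, BB H (∑ j ∈ J, f i j • (de (p i j) - de (sh t1 t2 (p i j))))
      (∑ j ∈ J, f i j • (de (p i j) - de (sh t1 t2 (p i j)))) := by
  set X : ℕ → W := fun i => ∑ j ∈ J, f i j • (de (p i j) - de (sh t1 t2 (p i j))) with hX
  let Y : ℕ → W := fun i => ∑ j ∈ J, f i j • de (p i j)
  let T : ℕ → W →ₗ[ℝ] W := fun r => TT (sh (r * t1) (r * t2))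
  have hpar : ∀ r : ℕ, ((r : ℤ) * t1 + r * t2) % 2 = 0 := by
    intro r
    rw [← mul_add]
    exact Int.emod_eq_zero_of_dvd (Dvd.dvd.mul_left (Int.dvd_of_emod_eq_zero ht) _)
  have hTcomp : ∀ (r s : ℕ) F, T r (T s F) = T (s + r) F := by
    intro r s F
    simp only [T, TT_comp]
    congr 2
    ext v
    · simp only [Equiv.trans_apply, sh_apply]; push_cast; ring
    · simp only [Equiv.trans_apply, sh_apply]; push_cast; ring
  have hθX : ∀ i r, 1 ≤ r → TT (R i r).θ (X i) = - T r (X i) := by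
    intro i r hr
    simp only [hX, T, map_sum, map_smul, map_sub, TT_de, ← Finset.sum_neg_distrib]
    refine Finset.sum_congr rfl fun j _ => ?_
    rw [h1 i r j hr, h2 i r j hr, ← smul_neg, neg_sub]
    congr 3
    simp only [sh_apply]
    push_cast
    rw [Prod.mk.injEq]; constructor <;> ring
  have hθX' : ∀ i r, 1 ≤ r → T r (TT (R i r).θ (X (i + r))) = - X (i + r) := by
    intro i r hr
    simp only [hX, T, map_sum, map_smul, map_sub, TT_de, ← Finset.sum_neg_distrib]
    refine Finset.sum_congr rfl fun j _ => ?_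
    rw [h4 i r j hr, h5 i r j hr, ← smul_neg, neg_sub]
  have hsupp : ∀ i r, 1 ≤ r → ∀ v ∈ (X i).support, (R i r).ℓ v ≤ (R i r).a := by
    intro i r hr
    apply supp_le {v | (R i r).ℓ v ≤ (R i r).a}
    refine Submodule.sum_mem _ fun j _ => Submodule.smul_mem _ _ (Submodule.sub_mem _ ?_ ?_)
    · exact Finsupp.single_mem_supported ℝ _ (h3 i r j hr).1
    · exact Finsupp.single_mem_supported ℝ _ (h3 i r j hr).2
  have hsupp' : ∀ i r, 1 ≤ r → ∀ v ∈ (X (i + r)).support, (R i r).a ≤ (R i r).ℓ v := by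
    intro i r hr
    apply supp_le {v | (R i r).a ≤ (R i r).ℓ v}
    refine Submodule.sum_mem _ fun j _ => Submodule.smul_mem _ _ (Submodule.sub_mem _ ?_ ?_)
    · exact Finsupp.single_mem_supported ℝ _ (h6 i r j hr).1
    · exact Finsupp.single_mem_supported ℝ _ (h6 i r j hr).2
  refine dec_abs (BB H) (BB_nonneg hH) (BB_symm hH) T ?_ ?_ ?_ ?_ Y X ?_ ?_ ?_ n
  · intro F
    have : sh (((0 : ℕ) : ℤ) * t1) (((0 : ℕ) : ℤ) * t2) = Equiv.refl V := by
      ext v <;> simp [sh_apply]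
    simp only [T]
    rw [this, TT_refl]
  · intro r F
    rw [hTcomp, add_comm]
  · intro r F F'
    rw [← hTcomp 1 r]
    exact BB_TT (sh_aut (hpar 1)) _ _
  · intro r F
    exact BB_TT (sh_aut (hpar r)) _ _
  · intro i
    simp only [hX, Y, T, map_sum, map_smul, TT_de, ← Finset.sum_sub_distrib, smul_sub]
    simp
  · intro i r
    have := rp hH (R i (r + 1)) (X i) (hsupp i (r + 1) (by omega))
    rw [hθX i (r + 1) (by omega), map_neg] at this
    exact this
  · intro i i' hii
    obtain ⟨r, rfl⟩ := Nat.exists_eq_add_of_lt hii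
    rw [show i + r + 1 - i = r + 1 by omega, show i + r + 1 = i + (r + 1) by ring]
    set s := r + 1 with hs
    have hs1 : 1 ≤ s := by omega
    have key := rp hH (R i s) (X i - TT (R i s).θ (X (i + s))) (by
      intro v hv
      classical
      rcases Finset.mem_union.1 (Finsupp.support_sub hv) with h | h
      · exact hsupp i s hs1 v h
      · exact mem_supp_TT (hsupp' i s hs1) v h)
    simp only [map_sub, LinearMap.sub_apply] at key
    have e1 : BB H (TT (R i s).θ (X (i + s))) (TT (R i s).θ (X i)) = BB H (X i) (X (i + s)) := by
      rw [BB_TT (R i s).aut, BB_symm hH]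
    have e2 : TT (R i s).θ (TT (R i s).θ (X (i + s))) = X (i + s) := by
      rw [TT_comp]
      have : (R i s).θ.trans (R i s).θ = Equiv.refl V := by ext v <;> simp [(R i s).inv]
      rw [this, TT_refl]
    have e3 : BB H (TT (R i s).θ (X (i + s))) (X (i + s)) = - BB H (X (i + s)) (T s (X (i + s))) := by
      have : BB H (T s (TT (R i s).θ (X (i + s)))) (T s (X (i + s))) =
        BB H (TT (R i s).θ (X (i + s))) (X (i + s)) := BB_TT (sh_aut (hpar s)) _ _
      rw [← this, hθX' i s hs1, map_neg, LinearMap.neg_apply]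
    rw [e1, e2, e3, hθX i s hs1, map_neg] at key
    linarith
end

section
open Filter Topology
def axisE (a : ℤ) : V ≃ V where
  toFun v := (2 * a - v.1, v.2)
  invFun v := (2 * a - v.1, v.2)
  left_inv v := by simp
  right_inv v := by simp

def diagE (a : ℤ) : V ≃ V where
  toFun v := (a - v.2, a - v.1)
  invFun v := (a - v.2, a - v.1)
  left_inv v := by simp
  right_inv v := by simp

lemma axisE_apply (a : ℤ) (v : V) : axisE a v = (2 * a - v.1, v.2) := rfl
lemma diagE_apply (a : ℤ) (v : V) : diagE a v = (a - v.2, a - v.1) := rfl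

def axisR (a : ℤ) : Refl where
  θ := axisE a
  ℓ v := v.1
  a := a
  aut := by
    refine ⟨fun u v => ?_, fun v => ?_⟩
    · simp only [adj, axisE_apply]; omega
    · simp only [axisE_apply]; omega
  inv v := by simp [axisE_apply]
  side v := by simp [axisE_apply]
  fix v hv := by
    ext
    · simp only [axisE_apply]; omega
    · rfl
  lip u v h := by unfold adj at h; omega

def diagR (a : ℤ) : Refl where
  θ := diagE a
  ℓ v := v.1 + v.2
  a := a
  aut := by
    refine ⟨fun u v => ?_, fun v => ?_⟩
    · simp only [adj, diagE_apply]; omega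
    · simp only [diagE_apply]; omega
  inv v := by simp [diagE_apply]
  side v := by simp only [diagE_apply]; ring
  fix v hv := by
    ext
    · simp only [diagE_apply]; omega
    · simp only [diagE_apply]; omega
  lip u v h := by unfold adj at h; omega

def pt (i j : ℕ) : V := (2 * (i : ℤ), 2 * (j : ℤ))

lemma BB_par {H : ℤ} (hH : 1 ≤ H) (A C : W) :
    BB H (A - C) (A - C) ≤ 2 * (BB H A A + BB H C C) := by
  have := BB_nonneg hH (A + C)
  simp only [map_add, map_sub, LinearMap.add_apply, LinearMap.sub_apply] at *
  linarith

lemma BB_par' {H : ℤ} (hH : 1 ≤ H) (A C : W) :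
    BB H (A + C) (A + C) ≤ 2 * (BB H A A + BB H C C) := by
  have := BB_nonneg hH (A - C)
  simp only [map_add, map_sub, LinearMap.add_apply, LinearMap.sub_apply] at *
  linarith

lemma BB_edge {H : ℤ} (hH : 1 ≤ H) (v : V) (hv : (v.1 + v.2) % 2 = 0) :
    BB H (de v - de (sh 1 1 v)) (de v - de (sh 1 1 v)) ≤ 4 := by
  refine BB_le hH _ 4 (by norm_num) ?_
  intro E N h hh
  have a1 := hh.1 v (v.1 + 1, v.2) (by simp [adj])
  have a2 := hh.1 (v.1 + 1, v.2) (sh 1 1 v) (by simp [adj, sh_apply])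
  rw [map_sub, LL_de, LL_de]
  have hw : ((sh 1 1 v).1 + (sh 1 1 v).2) % 2 = 0 := by simp only [sh_apply]; omega
  simp only [phi, if_pos hv, if_pos hw]
  have a3 : -2 ≤ h v - h (sh 1 1 v) ∧ h v - h (sh 1 1 v) ≤ 2 := by omega
  have a4 : (-2 : ℝ) ≤ h v - h (sh 1 1 v) := by exact_mod_cast a3.1
  have a5 : (h v - h (sh 1 1 v) : ℝ) ≤ 2 := by exact_mod_cast a3.2
  nlinarith

lemma diag_bound {H : ℤ} (hH : 1 ≤ H) (i : ℕ) (f : ℕ → ℝ) (n : ℕ) :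
    BB H (∑ j ∈ Finset.range n, f j • (de (pt i j) - de (sh 1 1 (pt i j))))
      (∑ j ∈ Finset.range n, f j • (de (pt i j) - de (sh 1 1 (pt i j)))) ≤
    8 * ∑ j ∈ Finset.range n, f j ^ 2 := by
  have key := dec_rp hH 1 1 (by norm_num) (Finset.univ : Finset Unit) (fun j _ => pt i j)
    (fun j _ => f j) (fun j r => diagR (2 * i + 2 * j + r + 1))
    (by
      intro j r _ _
      simp only [diagR, diagE_apply, sh_apply, pt, Prod.mk.injEq]; push_cast; constructor <;> ring)
    (by
      intro j r _ _
      simp only [diagR, diagE_apply, sh_apply, pt, Prod.mk.injEq]; push_cast; constructor <;> ring)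
    (by
      intro j r _ _
      simp only [diagR, sh_apply, pt]; push_cast; constructor <;> omega)
    (by
      intro j r _ _
      simp only [diagR, diagE_apply, sh_apply, pt, Prod.mk.injEq]; push_cast; constructor <;> ring)
    (by
      intro j r _ _
      simp only [diagR, diagE_apply, sh_apply, pt, Prod.mk.injEq]; push_cast; constructor <;> ring)
    (by
      intro j r _ _
      simp only [diagR, sh_apply, pt]; push_cast; constructor <;> omega) n
  simp only [Finset.univ_unique, Finset.sum_singleton] at key
  refine key.trans ?_
  rw [show (8 : ℝ) = 2 * 4 by norm_num, mul_assoc]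
  refine mul_le_mul_of_nonneg_left ?_ (by norm_num)
  rw [Finset.mul_sum]
  refine Finset.sum_le_sum fun j _ => ?_
  have := BB_edge hH (pt i j) (by simp only [pt]; omega)
  simp only [map_smul, LinearMap.smul_apply, smul_eq_mul]
  nlinarith [sq_nonneg (f j)]

lemma row_bound {H : ℤ} (hH : 1 ≤ H) (i : ℕ) (f : ℕ → ℝ) (n : ℕ) :
    BB H (∑ j ∈ Finset.range n, f j • (de (pt i j) - de (sh 2 0 (pt i j))))
      (∑ j ∈ Finset.range n, f j • (de (pt i j) - de (sh 2 0 (pt i j)))) ≤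
    32 * ∑ j ∈ Finset.range n, f j ^ 2 := by
  set A := ∑ j ∈ Finset.range n, f j • (de (pt i j) - de (sh 1 1 (pt i j))) with hA
  have e : ∑ j ∈ Finset.range n, f j • (de (pt i j) - de (sh 2 0 (pt i j))) =
      A - TT (axisR (2 * i + 1)).θ A := by
    simp only [hA, map_sum, map_smul, map_sub, TT_de, ← Finset.sum_sub_distrib, ← smul_sub]
    refine Finset.sum_congr rfl fun j _ => ?_
    have e1 : (axisR (2 * i + 1)).θ (pt i j) = sh 2 0 (pt i j) := by
      simp only [axisR, axisE_apply, sh_apply, pt, Prod.mk.injEq]; constructor <;> ring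
    have e2 : (axisR (2 * i + 1)).θ (sh 1 1 (pt i j)) = sh 1 1 (pt i j) := by
      simp only [axisR, axisE_apply, sh_apply, pt, Prod.mk.injEq]; constructor <;> first | trivial | omega
    rw [e1, e2]
    congr 1
    abel
  rw [e]
  refine (BB_par hH _ _).trans ?_
  rw [BB_TT (axisR (2 * i + 1)).aut]
  have := diag_bound hH i f n
  rw [← hA] at this
  linarith

lemma infrared {H : ℤ} (hH : 1 ≤ H) (f : ℕ → ℕ → ℝ) (n m : ℕ) :
    BB H (∑ i ∈ Finset.range n, ∑ j ∈ Finset.range m, f i j • (de (pt i j) - de (sh 2 0 (pt i j))))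
      (∑ i ∈ Finset.range n, ∑ j ∈ Finset.range m, f i j • (de (pt i j) - de (sh 2 0 (pt i j)))) ≤
    64 * ∑ i ∈ Finset.range n, ∑ j ∈ Finset.range m, f i j ^ 2 := by
  have key := dec_rp hH 2 0 (by norm_num) (Finset.range m) pt
    f (fun i r => axisR (2 * i + r + 1))
    (by
      intro j r _ _
      simp only [axisR, axisE_apply, sh_apply, pt, Prod.mk.injEq]; push_cast; constructor <;> ring)
    (by
      intro j r _ _
      simp only [axisR, axisE_apply, sh_apply, pt, Prod.mk.injEq]; push_cast; constructor <;> ring)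
    (by
      intro j r _ _
      simp only [axisR, sh_apply, pt]; push_cast; constructor <;> omega)
    (by
      intro j r _ _
      simp only [axisR, axisE_apply, sh_apply, pt, Prod.mk.injEq]; push_cast; constructor <;> ring)
    (by
      intro j r _ _
      simp only [axisR, axisE_apply, sh_apply, pt, Prod.mk.injEq]; push_cast; constructor <;> ring)
    (by
      intro j r _ _
      simp only [axisR, sh_apply, pt]; push_cast; constructor <;> omega) n
  refine key.trans ?_
  rw [show (64 : ℝ) = 2 * 32 by norm_num, mul_assoc]
  refine mul_le_mul_of_nonneg_left ?_ (by norm_num)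
  rw [Finset.mul_sum]
  exact Finset.sum_le_sum fun i _ => row_bound hH i (f i) m

def tauE : V ≃ V where
  toFun v := (v.2 + 2, v.1)
  invFun v := (v.2, v.1 - 2)
  left_inv v := by simp
  right_inv v := by simp

lemma tauE_apply (v : V) : tauE v = (v.2 + 2, v.1) := rfl

lemma tauE_aut : IsAut tauE := by
  refine ⟨fun u v => ?_, fun v => ?_⟩
  · simp only [adj, tauE_apply]; omega
  · simp only [tauE_apply]; omega

lemma infrared_vert {H : ℤ} (hH : 1 ≤ H) (g : ℕ → ℕ → ℝ) (n m : ℕ) :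
    BB H (∑ i ∈ Finset.range n, ∑ j ∈ Finset.range m,
        g i j • (de (pt (i + 1) j) - de (pt (i + 1) (j + 1))))
      (∑ i ∈ Finset.range n, ∑ j ∈ Finset.range m,
        g i j • (de (pt (i + 1) j) - de (pt (i + 1) (j + 1)))) ≤
    64 * ∑ i ∈ Finset.range n, ∑ j ∈ Finset.range m, g i j ^ 2 := by
  have key := infrared hH (fun c r => g r c) m n
  rw [Finset.sum_comm (s := Finset.range n) (t := Finset.range m) (f := fun i j => g i j ^ 2)]
  refine le_trans (le_of_eq ?_) key
  have : ∑ i ∈ Finset.range n, ∑ j ∈ Finset.range m,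
        g i j • (de (pt (i + 1) j) - de (pt (i + 1) (j + 1))) =
      TT tauE (∑ i ∈ Finset.range m, ∑ j ∈ Finset.range n,
        g j i • (de (pt i j) - de (sh 2 0 (pt i j)))) := by
    rw [Finset.sum_comm]
    simp only [map_sum, map_smul, map_sub, TT_de]
    refine Finset.sum_congr rfl fun i _ => Finset.sum_congr rfl fun j _ => ?_
    have e1 : tauE (pt i j) = pt (j + 1) i := by
      simp only [tauE_apply, pt, Prod.mk.injEq]; push_cast; constructor <;> first | trivial | omega
    have e2 : tauE (sh 2 0 (pt i j)) = pt (j + 1) (i + 1) := by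
      simp only [tauE_apply, sh_apply, pt, Prod.mk.injEq]; push_cast; constructor <;> ring
    rw [e1, e2]
  rw [this, BB_TT tauE_aut]

noncomputable def yy (i : ℕ) : W := ∑ j ∈ Finset.range (i + 1), (1 / ((i : ℝ) + 1)) • de (pt i j)

lemma abel_sum (x : ℕ → W) (n : ℕ) :
    ∑ j ∈ Finset.range n, ((j : ℝ) + 1) • (x j - x (j + 1)) =
      ∑ j ∈ Finset.range n, x j - (n : ℝ) • x n := by
  induction n with
  | zero => simp
  | succ n ih =>
    rw [Finset.sum_range_succ, ih, Finset.sum_range_succ]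
    push_cast
    module

lemma sh_pt (i j : ℕ) : sh 2 0 (pt i j) = pt (i + 1) j := by
  simp only [sh_apply, pt, Prod.mk.injEq]; push_cast; constructor <;> ring

lemma yy_step (i : ℕ) : yy i - yy (i + 1) =
    ∑ j ∈ Finset.range (i + 1), (1 / ((i : ℝ) + 1)) • (de (pt i j) - de (sh 2 0 (pt i j))) +
    ∑ j ∈ Finset.range (i + 1), (((j : ℝ) + 1) / ((i + 1) * (i + 2))) •
      (de (pt (i + 1) j) - de (pt (i + 1) (j + 1))) := by
  have e1 : ∑ j ∈ Finset.range (i + 1), (((j : ℝ) + 1) / ((i + 1) * (i + 2))) •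
      (de (pt (i + 1) j) - de (pt (i + 1) (j + 1))) =
      (1 / (((i : ℝ) + 1) * (i + 2))) • (∑ j ∈ Finset.range (i + 1), de (pt (i + 1) j) -
        ((i : ℝ) + 1) • de (pt (i + 1) (i + 1))) := by
    have := abel_sum (fun j => de (pt (i + 1) j)) (i + 1)
    push_cast at this
    rw [← this, Finset.smul_sum]
    refine Finset.sum_congr rfl fun j _ => ?_
    rw [smul_smul]
    congr 1; ring
  rw [e1]
  simp only [sh_pt, yy, ← Finset.smul_sum, Finset.sum_sub_distrib]
  rw [Finset.sum_range_succ (fun j => de (pt (i + 1) j)) (i + 1)]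
  set A := ∑ j ∈ Finset.range (i + 1), de (pt i j)
  set C := ∑ j ∈ Finset.range (i + 1), de (pt (i + 1) j)
  push_cast
  have h1 : ((i : ℝ) + 1) ≠ 0 := by positivity
  have h2 : ((i : ℝ) + 2) ≠ 0 := by positivity
  match_scalars
  · field_simp
  · field_simp
    ring
  · field_simp
    ring

noncomputable def harm (n : ℕ) : ℝ := ∑ i ∈ Finset.range n, 1 / ((i : ℝ) + 1)

lemma sum_range_ite (x : ℕ → W) (i n : ℕ) (hi : i < n) (c : ℕ → ℝ) :
    ∑ j ∈ Finset.range (i + 1), c j • x j =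
      ∑ j ∈ Finset.range n, (if j ≤ i then c j else 0) • x j := by
  simp only [ite_smul, zero_smul]
  rw [← Finset.sum_filter]
  refine Finset.sum_congr ?_ fun _ _ => rfl
  ext j
  simp only [Finset.mem_filter, Finset.mem_range]
  omega

lemma sum_range_ite_sq (i n : ℕ) (hi : i < n) (c : ℕ → ℝ) :
    ∑ j ∈ Finset.range n, (if j ≤ i then c j else 0) ^ 2 =
    ∑ j ∈ Finset.range (i + 1), c j ^ 2 := by
  simp only [ite_pow, zero_pow two_ne_zero]
  rw [← Finset.sum_filter]
  refine Finset.sum_congr ?_ fun _ _ => rfl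
  ext j
  simp only [Finset.mem_filter, Finset.mem_range]
  omega

lemma flow_bound {H : ℤ} (hH : 1 ≤ H) (n : ℕ) :
    BB H (yy 0 - yy n) (yy 0 - yy n) ≤ 256 * harm n := by
  have e1 : yy 0 - yy n = ∑ i ∈ Finset.range n, ∑ j ∈ Finset.range n,
      (if j ≤ i then 1 / ((i : ℝ) + 1) else 0) • (de (pt i j) - de (sh 2 0 (pt i j))) +
      ∑ i ∈ Finset.range n, ∑ j ∈ Finset.range n,
      (if j ≤ i then ((j : ℝ) + 1) / ((i + 1) * (i + 2)) else 0) •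
      (de (pt (i + 1) j) - de (pt (i + 1) (j + 1))) := by
    rw [← Finset.sum_range_sub' yy, ← Finset.sum_add_distrib]
    refine Finset.sum_congr rfl fun i hi => ?_
    rw [Finset.mem_range] at hi
    rw [yy_step, sum_range_ite _ i n hi, sum_range_ite _ i n hi]
  rw [e1]
  refine (BB_par' hH _ _).trans ?_
  have h1 := infrared hH (fun i j => if j ≤ i then 1 / ((i : ℝ) + 1) else 0) n n
  have h2 := infrared_vert hH (fun i j => if j ≤ i then ((j : ℝ) + 1) / ((i + 1) * (i + 2)) else 0) n n
  have s1 : ∑ i ∈ Finset.range n, ∑ j ∈ Finset.range n,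
      (if j ≤ i then 1 / ((i : ℝ) + 1) else 0) ^ 2 ≤ harm n := by
    refine Finset.sum_le_sum fun i hi => ?_
    rw [sum_range_ite_sq i n (Finset.mem_range.1 hi) (fun _ => 1 / ((i : ℝ) + 1))]
    rw [Finset.sum_const, Finset.card_range, nsmul_eq_mul]
    push_cast
    have : ((i : ℝ) + 1) ≠ 0 := by positivity
    apply le_of_eq
    field_simp
  have s2 : ∑ i ∈ Finset.range n, ∑ j ∈ Finset.range n,
      (if j ≤ i then ((j : ℝ) + 1) / ((i + 1) * (i + 2)) else 0) ^ 2 ≤ harm n := by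
    refine Finset.sum_le_sum fun i hi => ?_
    rw [sum_range_ite_sq i n (Finset.mem_range.1 hi) (fun j => ((j : ℝ) + 1) / ((i + 1) * (i + 2)))]
    have h3 : ((i : ℝ) + 1) ≠ 0 := by positivity
    calc ∑ j ∈ Finset.range (i + 1), (((j : ℝ) + 1) / ((i + 1) * (i + 2))) ^ 2
        ≤ ∑ j ∈ Finset.range (i + 1), (1 / ((i : ℝ) + 1)) ^ 2 := by
          refine Finset.sum_le_sum fun j hj => ?_
          have hj' : (j : ℝ) ≤ i := by exact_mod_cast Nat.lt_succ_iff.1 (Finset.mem_range.1 hj)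
          refine pow_le_pow_left₀ (by positivity) ?_ 2
          rw [div_le_div_iff₀ (by positivity) (by positivity)]
          nlinarith
      _ = _ := by
          rw [Finset.sum_const, Finset.card_range, nsmul_eq_mul]
          push_cast
          field_simp
  linarith

lemma yy_zero : yy 0 = de (0, 0) := by
  simp [yy, pt]

theorem A_bound {H : ℤ} (hH : 1 ≤ H) (n : ℕ) :
    BB H (de (0, 0) - de (4 * (n : ℤ), 0)) (de (0, 0) - de (4 * (n : ℤ), 0)) ≤ 1024 * harm n := by
  have h := flow_bound hH n
  rw [yy_zero] at h
  have e1 : TT (axisR (2 * n)).θ (de (0, 0) - yy n) = de (4 * (n : ℤ), 0) - yy n := by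
    simp only [map_sub, yy, map_sum, map_smul, TT_de]
    congr 1
    · congr 1
      simp only [axisR, axisE_apply, Prod.mk.injEq]; constructor <;> first | trivial | omega
    · refine Finset.sum_congr rfl fun j _ => ?_
      congr 2
      simp only [axisR, axisE_apply, pt, Prod.mk.injEq]; constructor <;> first | trivial | omega
  have h2 := BB_TT (H := H) (axisR (2 * n)).aut (de (0, 0) - yy n) (de (0, 0) - yy n)
  rw [e1] at h2
  have e2 : de (0, 0) - de (4 * (n : ℤ), 0) = (de (0, 0) - yy n) - (de (4 * (n : ℤ), 0) - yy n) := by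
    abel
  rw [e2]
  refine (BB_par hH _ _).trans ?_
  linarith
end

section
open Filter Topology
open Classical in
noncomputable def JJ (N : Finset V) (h : V → ℤ) (v : V) : ℤ :=
  if (v.1 + v.2) % 2 = 0 ∨ v ∈ N then - h v else h v

lemma JJ_JJ (N : Finset V) (h : V → ℤ) : JJ N (JJ N h) = h := by
  funext v
  unfold JJ
  split_ifs <;> simp

lemma JJ_even {N : Finset V} (h : V → ℤ) {v : V} (hv : (v.1 + v.2) % 2 = 0) :
    JJ N h v = - h v := by
  unfold JJ
  rw [if_pos (Or.inl hv)]

lemma JJ_OmP {H : ℤ} {E N : Finset V} (hN : nb E ⊆ N) {h : V → ℤ} (hh : OmP H E N h) :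
    OmP H E N (JJ N h) := by
  obtain ⟨h1, h2, h3, h4, h5⟩ := hh
  have aux : ∀ u v : V, adj u v → (u.1 + u.2) % 2 = 0 →
      JJ N h u - JJ N h v = 1 ∨ JJ N h u - JJ N h v = -1 := by
    intro u v huv hu
    have := h1 u v huv
    rw [JJ_even h hu]
    have hv : (v.1 + v.2) % 2 = 1 := by unfold adj at huv; omega
    by_cases hvN : v ∈ N
    · have : JJ N h v = - h v := if_pos (Or.inr hvN)
      omega
    · have e : JJ N h v = h v := if_neg (by rintro (h | h); omega; exact hvN h)
      have : u ∉ E := fun hE => hvN (hN (mem_nb.2 ⟨u, hE, huv⟩))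
      have := h4 u hu this
      omega
  refine ⟨?_, ?_, ?_, ?_, ?_⟩
  · intro u v huv
    by_cases hu : (u.1 + u.2) % 2 = 0
    · exact aux u v huv hu
    · have := aux v u (adj_symm huv) (by unfold adj at huv; omega)
      omega
  · intro v
    have := h2 v
    unfold JJ; split_ifs <;> omega
  · intro v
    have := h3 v
    unfold JJ; split_ifs <;> omega
  · intro v h0 hv
    rw [JJ_even h h0, h4 v h0 hv]; rfl
  · intro v h0 hv
    rw [JJ, if_neg (by rintro (h | h); omega; exact hv h)]
    exact h5 v h0 hv

noncomputable def XX (H : ℤ) (E N : Finset V) (w : V) (k : ℤ) : Finset (V → ℤ) :=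
  (Om H E N).filter (fun h => h w = k)

lemma mem_XX {H : ℤ} {E N : Finset V} {w : V} {k : ℤ} {h : V → ℤ} :
    h ∈ XX H E N w k ↔ OmP H E N h ∧ h w = k := by
  simp [XX]

lemma XX_J {H : ℤ} {E N : Finset V} (hN : nb E ⊆ N) {w : V} (hw : (w.1 + w.2) % 2 = 0) (k : ℤ)
    (f : (V → ℤ) → ℝ) :
    ∑ h ∈ XX H E N w k, f h = ∑ h ∈ XX H E N w (-k), f (JJ N h) := by
  refine Finset.sum_nbij' (JJ N) (JJ N) ?_ ?_ ?_ ?_ ?_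
  · intro h hh
    rw [mem_XX] at *
    exact ⟨JJ_OmP hN hh.1, by rw [JJ_even h hw, hh.2]⟩
  · intro h hh
    rw [mem_XX] at *
    exact ⟨JJ_OmP hN hh.1, by rw [JJ_even h hw, hh.2, neg_neg]⟩
  · intro h _; exact JJ_JJ N h
  · intro h _; exact JJ_JJ N h
  · intro h _; rw [JJ_JJ]

lemma fkg_shift {H : ℤ} {E N : Finset V} {w o : V}
    (hw : (w.1 + w.2) % 2 = 0) (k : ℤ) (hk : 0 ≤ k) :
    (∑ h ∈ XX H E N w 0, ((min (h o) 0 : ℤ) : ℝ) ^ 2) * (XX H E N w k).card ≤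
    (∑ h ∈ XX H E N w k, ((min (h o - k) 0 : ℤ) : ℝ) ^ 2) * (XX H E N w 0).card := by
  classical
  set sh' : (V → ℤ) → (V → ℤ) := fun h v => h v - k with hsh
  have inj : Function.Injective sh' := by
    intro a b hab
    funext v
    have := congrFun hab v
    simp only [hsh] at this
    omega
  have key := four_ind (XX H E N w 0) ((XX H E N w k).image sh') ((XX H E N w k).image sh')
    (XX H E N w 0) (fun h => ((min (h o) 0 : ℤ) : ℝ) ^ 2) (fun _ => 1)
    (fun h => ((min (h o) 0 : ℤ) : ℝ) ^ 2) (fun _ => 1)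
    (fun _ _ => sq_nonneg _) (fun _ _ => zero_le_one) (fun _ _ => sq_nonneg _)
    (fun _ _ => zero_le_one) ?_
  · rw [Finset.sum_image (fun a _ b _ h => inj h), Finset.sum_image (fun a _ b _ h => inj h)] at key
    simpa [hsh] using key
  · intro a ha b hb
    rw [Finset.mem_image] at hb
    obtain ⟨g, hg, rfl⟩ := hb
    rw [mem_XX] at ha hg
    obtain ⟨⟨a1, a2, a3, a4, a5⟩, a6⟩ := ha
    obtain ⟨⟨g1, g2, g3, g4, g5⟩, g6⟩ := hg
    have hk2 : k % 2 = 0 := by have := g2 w; omega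
    have hs1 : ∀ u v, adj u v → sh' g u - sh' g v = 1 ∨ sh' g u - sh' g v = -1 := by
      intro u v huv
      have := g1 u v huv
      simp only [hsh]; omega
    have hpar : ∀ u, (a u - sh' g u) % 2 = 0 := by
      intro u
      have := g2 u; have := a2 u
      simp only [hsh]; omega
    refine ⟨?_, ?_, ?_⟩
    · rw [Finset.mem_image]
      refine ⟨fun v => (a ⊓ sh' g) v + k, ?_, ?_⟩
      · rw [mem_XX]
        refine ⟨⟨?_, ?_, ?_, ?_, ?_⟩, ?_⟩
        · intro u v huv
          have := inf_step (a1 u v huv) (hs1 u v huv) (hpar u)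
          simp only [] at this ⊢
          omega
        · intro v
          have := a2 v; have := g2 v
          simp only [inf_ap, hsh]; omega
        · intro v
          have := a3 v; have := g3 v
          simp only [inf_ap, hsh]; omega
        · intro v h0 hv
          have := a4 v h0 hv; have := g4 v h0 hv
          simp only [inf_ap, hsh]; omega
        · intro v h0 hv
          have := a5 v h0 hv; have := g5 v h0 hv
          simp only [inf_ap, hsh]; omega
        · simp only [inf_ap, hsh]; omega
      · funext v
        simp [hsh]
    · rw [mem_XX]
      refine ⟨⟨?_, ?_, ?_, ?_, ?_⟩, ?_⟩
      · intro u v huv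
        exact sup_step (a1 u v huv) (hs1 u v huv) (hpar u)
      · intro v
        have := a2 v; have := g2 v
        simp only [sup_ap, hsh]; omega
      · intro v
        have := a3 v; have := g3 v
        simp only [sup_ap, hsh]; omega
      · intro v h0 hv
        have := a4 v h0 hv; have := g4 v h0 hv
        simp only [sup_ap, hsh]; omega
      · intro v h0 hv
        have := a5 v h0 hv; have := g5 v h0 hv
        simp only [sup_ap, hsh]; omega
      · simp only [sup_ap, hsh]; omega
    · simp only [mul_one]
      have e1 : (min ((a ⊓ sh' g) o) 0 : ℤ) ≤ min (a o) 0 :=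
        min_le_min_right _ (by rw [inf_ap]; exact min_le_left _ _)
      have e2 : (min (a o) 0 : ℤ) ≤ 0 := min_le_right _ _
      have e1' : ((min ((a ⊓ sh' g) o) 0 : ℤ) : ℝ) ≤ (min (a o) 0 : ℤ) := by exact_mod_cast e1
      have e2' : ((min (a o) 0 : ℤ) : ℝ) ≤ 0 := by exact_mod_cast e2
      nlinarith

lemma shift_all {H : ℤ} {E N : Finset V} (hN : nb E ⊆ N) {w o : V}
    (hw : (w.1 + w.2) % 2 = 0) (ho : (o.1 + o.2) % 2 = 0) (k : ℤ) :
    (∑ h ∈ XX H E N w 0, ((h o : ℤ) : ℝ) ^ 2) * (XX H E N w k).card ≤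
    2 * (∑ h ∈ XX H E N w k, ((h o : ℝ) - h w) ^ 2) * (XX H E N w 0).card := by
  have e0 : ∑ h ∈ XX H E N w 0, ((h o : ℤ) : ℝ) ^ 2 =
      2 * ∑ h ∈ XX H E N w 0, ((min (h o) 0 : ℤ) : ℝ) ^ 2 := by
    have := XX_J (H := H) hN hw 0 (fun h => ((min (h o) 0 : ℤ) : ℝ) ^ 2)
    rw [neg_zero] at this
    rw [two_mul]
    nth_rewrite 2 [this]
    rw [← Finset.sum_add_distrib]
    refine Finset.sum_congr rfl fun h _ => ?_
    rw [JJ_even h ho]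
    have : (h o) ^ 2 = (min (h o) 0) ^ 2 + (min (- h o) 0) ^ 2 := by
      rcases le_total 0 (h o) with h0 | h0
      · rw [min_eq_right h0, min_eq_left (by omega)]; ring
      · rw [min_eq_left h0, min_eq_right (by omega)]; ring
    exact_mod_cast this
  have pos : ∀ k : ℤ, 0 ≤ k → (∑ h ∈ XX H E N w 0, ((h o : ℤ) : ℝ) ^ 2) * (XX H E N w k).card ≤
    2 * (∑ h ∈ XX H E N w k, ((h o : ℝ) - h w) ^ 2) * (XX H E N w 0).card := by
    intro k hk
    have := fkg_shift (H := H) (E := E) (N := N) (o := o) hw k hk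
    rw [e0, mul_assoc, mul_assoc]
    refine mul_le_mul_of_nonneg_left (this.trans ?_) (by norm_num)
    refine mul_le_mul_of_nonneg_right ?_ (Nat.cast_nonneg _)
    refine Finset.sum_le_sum fun h hh => ?_
    rw [(mem_XX.1 hh).2]
    rcases le_total 0 (h o - k) with h0 | h0
    · rw [min_eq_right h0]
      simpa using sq_nonneg _
    · rw [min_eq_left h0]
      push_cast
      exact le_rfl
  rcases le_total 0 k with hk | hk
  · exact pos k hk
  · have h1 := pos (-k) (by omega)
    have c := XX_J (H := H) hN hw k (fun _ => 1)
    simp only [Finset.sum_const, nsmul_eq_mul, mul_one] at c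
    have s := XX_J (H := H) hN hw k (fun h => ((h o : ℝ) - h w) ^ 2)
    rw [c, s]
    refine h1.trans (le_of_eq ?_)
    congr 2
    refine Finset.sum_congr rfl fun h _ => ?_
    rw [JJ_even h ho, JJ_even h hw]
    push_cast
    ring

lemma shift_sum {H : ℤ} {E N : Finset V} (hN : nb E ⊆ N) {w o : V}
    (hw : (w.1 + w.2) % 2 = 0) (ho : (o.1 + o.2) % 2 = 0) :
    (∑ h ∈ XX H E N w 0, ((h o : ℤ) : ℝ) ^ 2) * (Om H E N).card ≤
    2 * (∑ h ∈ Om H E N, ((h o : ℝ) - h w) ^ 2) * (XX H E N w 0).card := by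
  have maps : ∀ h ∈ Om H E N, h w ∈ Finset.Icc (-H) H := by
    intro h hh
    rw [mem_Om] at hh
    exact Finset.mem_Icc.2 (hh.2.2.1 w)
  have c : ((Om H E N).card : ℝ) = ∑ k ∈ Finset.Icc (-H) H, ((XX H E N w k).card : ℝ) := by
    have := Finset.card_eq_sum_card_fiberwise maps
    rw [this]; push_cast; rfl
  have s : ∑ h ∈ Om H E N, ((h o : ℝ) - h w) ^ 2 =
      ∑ k ∈ Finset.Icc (-H) H, ∑ h ∈ XX H E N w k, ((h o : ℝ) - h w) ^ 2 :=
    (Finset.sum_fiberwise_of_maps_to maps _).symm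
  rw [c, s, Finset.mul_sum, Finset.mul_sum, Finset.sum_mul]
  exact Finset.sum_le_sum fun k _ => shift_all hN hw ho k

lemma XX_zero {H : ℤ} {E N : Finset V} {w : V} (hw : (w.1 + w.2) % 2 = 0) :
    XX H E N w 0 = Om H (E.erase w) N := by
  ext h
  rw [mem_XX, mem_Om]
  constructor
  · rintro ⟨⟨h1, h2, h3, h4, h5⟩, h6⟩
    refine ⟨h1, h2, h3, ?_, h5⟩
    intro v h0 hv
    by_cases hvw : v = w
    · rw [hvw, h6]
    · exact h4 v h0 (fun h => hv (Finset.mem_erase.2 ⟨hvw, h⟩))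
  · rintro ⟨h1, h2, h3, h4, h5⟩
    refine ⟨⟨h1, h2, h3, ?_, h5⟩, h4 w hw (by simp)⟩
    intro v h0 hv
    exact h4 v h0 (fun h => hv (Finset.mem_of_mem_erase h))

theorem corr_le_BB {H : ℤ} (hH : 1 ≤ H) (E0 : Finset V) {w o : V}
    (hw : (w.1 + w.2) % 2 = 0) (ho : (o.1 + o.2) % 2 = 0) (hwE : w ∉ E0) :
    corr H E0 o o ≤ 2 * BB H (de o - de w) (de o - de w) := by
  have ht := (BE_tendsto hH (de o - de w) (de o - de w)).const_mul 2
  refine ge_of_tendsto ht ?_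
  filter_upwards [eventually_ge_atTop E0] with E hE
  have hsub : E0 ⊆ E.erase w := fun v hv =>
    Finset.mem_erase.2 ⟨fun h => hwE (h ▸ hv), hE hv⟩
  refine (corr_mono hH hsub o o).trans ?_
  rw [corr_eq hH (nb_mono (Finset.erase_subset w E)), BE_eq' hH (Finset.Subset.refl (nb E))]
  have key := shift_sum (H := H) (Finset.Subset.refl (nb E)) hw ho
  rw [XX_zero hw] at key
  have p1 := Om_card_pos hH (E.erase w) (nb E)
  have p2 := Om_card_pos hH E (nb E)
  unfold avg
  simp only [map_sub, LL_de, phi, if_pos hw, if_pos ho]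
  simp only [← sq]
  rw [mul_div_assoc', div_le_div_iff₀ p1 p2]
  exact key
end

section
open Filter Topology
def inB (m : ℤ) (v : V) : Prop := -m ≤ v.1 ∧ v.1 ≤ m ∧ -m ≤ v.2 ∧ v.2 ≤ m

noncomputable def Bx (m : ℤ) : Finset V := Finset.Icc (-m) m ×ˢ Finset.Icc (-m) m

lemma mem_Bx {m : ℤ} {v : V} : v ∈ Bx m ↔ inB m v := by
  simp only [Bx, inB, Finset.mem_product, Finset.mem_Icc]
  tauto

noncomputable def En (m : ℤ) : Finset V := (Bx (m - 1)).filter (fun v => (v.1 + v.2) % 2 = 0)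

lemma mem_En {m : ℤ} {v : V} : v ∈ En m ↔ inB (m - 1) v ∧ (v.1 + v.2) % 2 = 0 := by
  simp only [En, Finset.mem_filter, mem_Bx]

lemma mem_LamEven {m : ℤ} {v : V} :
    v ∈ LamEven m ↔ inB m v ∨ (inB (m + 1) v ∧ (v.1 + v.2) % 2 = 0) := by
  have e : infNorm v = m + 1 ↔ inB (m + 1) v ∧ ¬ inB m v := by
    unfold infNorm inB
    rcases abs_cases v.1 with h1 | h1 <;> rcases abs_cases v.2 with h2 | h2 <;>
      rw [h1.1, h2.1] <;> omega
  simp only [LamEven, Lam, Lam2, Set.mem_union, Set.mem_setOf_eq, e, IsEvenV, abs_le,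
    Int.even_iff]
  unfold inB
  omega

lemma nbE_sub (m : ℤ) : nb (En m) ⊆ Bx m := by
  intro u hu
  rw [mem_nb] at hu
  obtain ⟨v, hv, ha⟩ := hu
  rw [mem_En] at hv
  rw [mem_Bx]
  unfold inB adj at *
  omega

lemma bdry_even {m : ℤ} (hm : 2 ≤ m) {v : V} (hv : v ∈ bdry (LamEven m)) :
    (v.1 + v.2) % 2 = 0 ∧ ¬ inB (m - 1) v := by
  obtain ⟨hv1, u, hu, ha⟩ := hv
  rw [mem_LamEven] at hv1 hu
  unfold inB adj at *
  omega

lemma even_bdry {m : ℤ} (hm : 2 ≤ m) {v : V} (hv : v ∈ LamEven m) (h0 : (v.1 + v.2) % 2 = 0)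
    (h1 : ¬ inB (m - 1) v) : v ∈ bdry (LamEven m) := by
  refine ⟨hv, ?_⟩
  rw [mem_LamEven] at hv
  have h3 : m ≤ v.1 ∨ v.1 ≤ -m ∨ m ≤ v.2 ∨ v.2 ≤ -m := by unfold inB at h1; omega
  have out : ∀ u : V, (u.1 + u.2) % 2 = 1 → ¬ inB m u → u ∉ LamEven m := by
    intro u hu hb h
    rw [mem_LamEven] at h
    rcases h with h | h
    · exact hb h
    · omega
  rcases h3 with h | h | h | h
  · exact ⟨(v.1 + 1, v.2), out _ (by simp only []; omega) (by unfold inB; simp only []; omega),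
      by unfold adj; simp only []; omega⟩
  · exact ⟨(v.1 - 1, v.2), out _ (by simp only []; omega) (by unfold inB; simp only []; omega),
      by unfold adj; simp only []; omega⟩
  · exact ⟨(v.1, v.2 + 1), out _ (by simp only []; omega) (by unfold inB; simp only []; omega),
      by unfold adj; simp only []; omega⟩
  · exact ⟨(v.1, v.2 - 1), out _ (by simp only []; omega) (by unfold inB; simp only []; omega),
      by unfold adj; simp only []; omega⟩

open Classical in
noncomputable def extB (m : ℤ) (h : V → ℤ) (v : V) : ℤ := if inB m v then h v else bas v

open Classical in
noncomputable def resB (m : ℤ) (h : V → ℤ) (v : V) : ℤ := if inB m v then h v else 0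

lemma abs_one {x : ℤ} : |x| = 1 ↔ x = 1 ∨ x = -1 := by
  rw [abs_eq (by norm_num)]

lemma Hom0_zero {m : ℤ} (hm : 2 ≤ m) {h : V → ℤ} (hh : h ∈ Hom0 (LamEven m)) {v : V}
    (h0 : (v.1 + v.2) % 2 = 0) (h1 : ¬ inB (m - 1) v) : h v = 0 := by
  by_cases hv : v ∈ LamEven m
  · exact hh.2 v (even_bdry hm hv h0 h1)
  · exact hh.1.2.2 v hv

lemma Hom0_out {m : ℤ} (hm : 2 ≤ m) {h : V → ℤ} (hh : h ∈ Hom0 (LamEven m)) {v : V}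
    (h1 : ¬ inB m v) : h v = 0 := by
  by_cases h0 : (v.1 + v.2) % 2 = 0
  · exact Hom0_zero hm hh h0 (by unfold inB at *; omega)
  · refine hh.1.2.2 v ?_
    rw [mem_LamEven]
    tauto

lemma extB_OmP {m H : ℤ} (hm : 2 ≤ m) (hH : 1 ≤ H) {h : V → ℤ} (hh : h ∈ Hom0 (LamEven m))
    (hb : ∀ v, |h v| ≤ H) : OmP H (En m) (Bx m) (extB m h) := by
  have hz := fun v => Hom0_zero (v := v) hm hh
  obtain ⟨⟨h1, h2, h3⟩, h4⟩ := hh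
  have hbas : ∀ v, 0 ≤ bas v ∧ bas v ≤ 1 := by intro v; unfold bas; omega
  have inL : ∀ v, inB m v → v ∈ LamEven m := fun v hv => mem_LamEven.2 (Or.inl hv)
  have aux : ∀ u v : V, adj u v → inB m u → ¬ inB m v →
      extB m h u - extB m h v = 1 ∨ extB m h u - extB m h v = -1 := by
    intro u v huv hu hv
    have e1 : extB m h u = h u := if_pos hu
    have e2 : extB m h v = bas v := if_neg hv
    rw [e1, e2]
    by_cases h0 : (u.1 + u.2) % 2 = 0
    · have := hz u h0 (by unfold inB adj at *; omega)
      rw [this]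
      unfold bas; unfold adj at huv; omega
    · have h0v : (v.1 + v.2) % 2 = 0 := by unfold adj at huv; omega
      have a1 := hz v h0v (by unfold inB at *; omega)
      have a2 := h1 u v (inL u hu) (mem_LamEven.2 (Or.inr ⟨by unfold inB adj at *; omega, h0v⟩)) huv
      rw [a1, abs_one] at a2
      unfold bas; rw [h0v]; exact a2
  refine ⟨?_, ?_, ?_, ?_, ?_⟩
  · intro u v huv
    by_cases hu : inB m u
    · by_cases hv : inB m v
      · have e1 : extB m h u = h u := if_pos hu
        have e2 : extB m h v = h v := if_pos hv
        rw [e1, e2]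
        exact abs_one.1 (h1 u v (inL u hu) (inL v hv) huv)
      · exact aux u v huv hu hv
    · by_cases hv : inB m v
      · have := aux v u (adj_symm huv) hv hu
        omega
      · have e1 : extB m h u = bas u := if_neg hu
        have e2 : extB m h v = bas v := if_neg hv
        rw [e1, e2]
        unfold bas; unfold adj at huv; omega
  · intro v
    unfold extB
    split_ifs with hv
    · exact Int.even_iff.1 (h2 v (inL v hv))
    · unfold bas; omega
  · intro v
    unfold extB
    split_ifs with hv
    · exact abs_le.1 (hb v)
    · have := hbas v; omega
  · intro v h0 hv
    rw [mem_En] at hv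
    unfold extB
    split_ifs with hv'
    · exact hz v h0 (fun h => hv ⟨h, h0⟩)
    · exact h0
  · intro v h0 hv
    rw [mem_Bx] at hv
    unfold extB
    rw [if_neg hv]
    exact h0

lemma resB_Hom0 {m H : ℤ} (hm : 2 ≤ m) {g : V → ℤ} (hg : OmP H (En m) (Bx m) g) :
    resB m g ∈ Hom0 (LamEven m) := by
  obtain ⟨h1, h2, h3, h4, h5⟩ := hg
  have e : ∀ v ∈ LamEven m, resB m g v = g v := by
    intro v hv
    unfold resB
    split_ifs with h
    · rfl
    · rw [mem_LamEven] at hv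
      have hv := hv.resolve_left h
      exact (h4 v hv.2 (by rw [mem_En]; rintro ⟨h', _⟩; unfold inB at *; omega)).symm
  refine ⟨⟨?_, ?_, ?_⟩, ?_⟩
  · intro u v hu hv huv
    rw [e u hu, e v hv, abs_one]
    exact h1 u v huv
  · intro v hv
    rw [e v hv, Int.even_iff]
    exact h2 v
  · intro v hv
    rw [mem_LamEven] at hv
    exact if_neg (fun h => hv (Or.inl h))
  · intro v hv
    have := bdry_even hm hv
    rw [e v hv.1]
    exact h4 v this.1 (by rw [mem_En]; tauto)

lemma ext_res {m H : ℤ} {g : V → ℤ} (hg : OmP H (En m) (Bx m) g) :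
    extB m (resB m g) = g := by
  obtain ⟨h1, h2, h3, h4, h5⟩ := hg
  funext v
  unfold extB resB
  split_ifs with h
  · rfl
  · unfold bas
    rcases Int.emod_two_eq_zero_or_one (v.1 + v.2) with h0 | h0
    · rw [h4 v h0 (by rw [mem_En]; rintro ⟨h', _⟩; unfold inB at *; omega), h0]
    · rw [h5 v h0 (by rwa [mem_Bx]), h0]

lemma res_ext {m : ℤ} (hm : 2 ≤ m) {h : V → ℤ} (hh : h ∈ Hom0 (LamEven m)) :
    resB m (extB m h) = h := by
  funext v
  unfold extB resB
  split_ifs with h1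
  · exact if_pos h1
  · exact (Hom0_out hm hh h1).symm

lemma expec_le {m : ℤ} (hm : 2 ≤ m) {c : ℝ} (hc : 0 ≤ c)
    (hcorr : ∀ H : ℤ, 1 ≤ H → corr H (En m) (0, 0) (0, 0) ≤ c) :
    expec (Hom0 (LamEven m)) (fun h => (h ((0 : ℤ), (0 : ℤ)) : ℝ) ^ 2) ≤ c := by
  classical
  by_cases hfin : (Hom0 (LamEven m)).Finite
  swap
  · have : Nat.card (Hom0 (LamEven m)) = 0 := Set.Infinite.card_eq_zero hfin
    unfold expec
    rw [this]
    simpa using hc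
  set S := hfin.toFinset with hS
  have mS : ∀ h, h ∈ S ↔ h ∈ Hom0 (LamEven m) := fun h => hfin.mem_toFinset
  set H : ℤ := 1 + ∑ h ∈ S, ∑ v ∈ Bx m, |h v| with hHdef
  have nn : ∀ h : V → ℤ, 0 ≤ ∑ v ∈ Bx m, |h v| := fun h => Finset.sum_nonneg fun _ _ => abs_nonneg _
  have hH : 1 ≤ H := by
    have : 0 ≤ ∑ h ∈ S, ∑ v ∈ Bx m, |h v| := Finset.sum_nonneg fun h _ => nn h
    omega
  have hbd : ∀ h ∈ Hom0 (LamEven m), ∀ v, |h v| ≤ H := by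
    intro h hh v
    by_cases hv : inB m v
    · have a1 : |h v| ≤ ∑ v ∈ Bx m, |h v| :=
        Finset.single_le_sum (f := fun v => |h v|) (fun _ _ => abs_nonneg _) (mem_Bx.2 hv)
      have a2 : ∑ v ∈ Bx m, |h v| ≤ ∑ h ∈ S, ∑ v ∈ Bx m, |h v| :=
        Finset.single_le_sum (f := fun h : V → ℤ => ∑ v ∈ Bx m, |h v|) (fun h _ => nn h)
          ((mS h).2 hh)
      omega
    · rw [Hom0_out hm hh hv, abs_zero]; omega
  have hsum : ∀ f : (V → ℤ) → ℝ, ∑ h ∈ S, f (extB m h) = ∑ g ∈ Om H (En m) (Bx m), f g := by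
    intro f
    refine Finset.sum_nbij' (extB m) (resB m) ?_ ?_ ?_ ?_ ?_
    · intro h hh
      rw [mS] at hh
      rw [mem_Om]
      exact extB_OmP hm hH hh (hbd h hh)
    · intro g hg
      rw [mem_Om] at hg
      rw [mS]
      exact resB_Hom0 hm hg
    · intro h hh
      rw [mS] at hh
      exact res_ext hm hh
    · intro g hg
      rw [mem_Om] at hg
      exact ext_res hg
    · intro h _; rfl
  have hcard : ((Nat.card (Hom0 (LamEven m)) : ℕ) : ℝ) = (Om H (En m) (Bx m)).card := by
    have := hsum (fun _ => 1)
    simp only [Finset.sum_const, nsmul_eq_mul, mul_one] at this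
    rw [← this, Nat.card_eq_card_finite_toFinset hfin]
  have hs2 := hsum (fun h => phi h (0, 0) * phi h (0, 0))
  have key := hcorr H hH
  rw [corr_eq hH (nbE_sub m)] at key
  unfold avg at key
  rw [← hs2, ← hcard] at key
  unfold expec
  rw [finsum_mem_eq_finite_toFinset_sum _ hfin]
  refine le_trans (le_of_eq ?_) key
  congr 1
  refine Finset.sum_congr rfl fun h _ => ?_
  have e : extB m h (0, 0) = h (0, 0) := if_pos (by unfold inB; simp only []; omega)
  simp [phi, e, sq]

lemma harm_le (n : ℕ) : harm n ≤ 1 + Real.log n := by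
  have := harmonic_le_one_add_log n
  refine le_trans (le_of_eq ?_) this
  unfold harm harmonic
  push_cast
  simp

theorem var_bound (n : ℕ) (hn : 2 ≤ n) :
    expec (Hom0 (LamEven (n : ℤ))) (fun h => (h ((0 : ℤ), (0 : ℤ)) : ℝ) ^ 2) ≤
      2048 * (1 + Real.log n) := by
  have hl : 0 ≤ Real.log n := Real.log_natCast_nonneg n
  refine expec_le (by exact_mod_cast hn) (by positivity) fun H hH => ?_
  have h1 := corr_le_BB hH (En n) (w := (4 * (n : ℤ), 0)) (o := (0, 0)) (by simp only []; omega)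
    (by simp) (by rw [mem_En]; unfold inB; simp only []; omega)
  have h2 := A_bound hH n
  have h3 := harm_le n
  linarith

theorem var_final : ∃ C : ℝ, 0 < C ∧ ∀ n : ℕ, 2 ≤ n →
    expec (Hom0 (LamEven (n : ℤ))) (fun h => (h ((0 : ℤ), (0 : ℤ)) : ℝ) ^ 2) ≤
      C * Real.log n := by
  have h2 : 0 < Real.log 2 := Real.log_pos (by norm_num)
  refine ⟨2048 * (1 + 1 / Real.log 2), by positivity, fun n hn => (var_bound n hn).trans ?_⟩
  have hl : Real.log 2 ≤ Real.log n := Real.log_le_log (by norm_num) (by exact_mod_cast hn)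
  have : 1 ≤ 1 / Real.log 2 * Real.log n := by
    rw [one_div, inv_mul_eq_div, le_div_iff₀ h2]; linarith
  nlinarith
end

/-- Logarithmic upper bound on the variance of the height at the origin. -/
theorem variance_upper : ∃ C : ℝ, 0 < C ∧ ∀ n : ℕ, 2 ≤ n →
    expec (Hom0 (LamEven (n : ℤ))) (fun h => (h ((0 : ℤ), (0 : ℤ)) : ℝ) ^ 2) ≤
      C * Real.log n := by
  exact var_final

end SquareIce
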